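/- arXiv:2506.06477 — 4 statements merged into one kernel-verified Lean document; each statement's English description precedes it below -/
import Mathlib

section
/- For every even integer n ≥ 12 and every set S of n points in the Euclidean plane in general position that is partitioned into a set R of n/2 red points and a set B of n/2 blue points, there exist a red point u ∈ R and a blue point v ∈ B such that every closed disk containing both u and v contains at least ⌈n/(6+√26)⌉ + 1 points of S, where ⌈n/(6+√26)⌉ denotes the least integer greater than or equal to the real number n/(6+√26). -/
/-!
Lift the points to the paraboloid `z = x² + y²`, so that disks become half-spaces. For a finite set
`S`, say that an oriented plane through three lifts has level `j` if exactly `j` lifts lie on its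
positive side. Planes of level `0` carry the faces of the convex hull of the lifts: a projection
direction along which each non-extreme lift is the middle vertex of exactly two faces shows that
there are `2 * (#S - 2)` of them. Counting how the levels change when one point is deleted gives a
recursion in `j`, whose solution is that exactly `2 * (j + 1) * (#S - 2 - j)` oriented planes have
level `j`.

If `u` and `v` lie in a disk with at most `j + 2` points of `S`, then a plane through their lifts
can be rotated about the line joining them until it has level `j`. Were this the case for all
`u ∈ R` and `v ∈ B`, the ordered pairs `(u, v)` and `(v, u)` would extend to distinct triples of
level `j`, so `2 * #R * #B ≤ 6 * (j + 1) * (#S - 2 - j)`. For `#R = #B` this fails as long as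
`j + 1 < #S / (6 + √24)`, where `6 + √24` is the larger root of `x² - 12 * x + 12`.
-/

open EuclideanGeometry Metric

noncomputable section

/-- Points of the Euclidean plane. -/
abbrev Pt := EuclideanSpace ℝ (Fin 2)

/-- A set of points in the plane is in general position if no three of its points are
collinear and no four of its points are concyclic. -/
def GenPos (S : Set Pt) : Prop :=
  (∀ T ⊆ S, T.ncard = 3 → ¬Collinear ℝ T) ∧
  (∀ T ⊆ S, T.ncard = 4 → ¬Cospherical T)

section Combinatorics

open Finset

variable {α β : Type*} [LinearOrder β]

/-- Discrete intermediate values: from one element to the next in the order given by `f`, the rank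
rises by one while `g` does not rise. -/
lemma exists_rank_add_eq {U : Finset α} {f : α → β}
    (hf : Set.InjOn f U) {g : α → ℕ} (hg : ∀ v ∈ U, ∀ w ∈ U, f v ≤ f w → g w ≤ g v) {j : ℕ}
    (hgj : ∀ w ∈ U, g w ≤ j) (hj : j < #U) :
    ∃ w ∈ U, #{d ∈ U | f d < f w} + g w = j := by
  classical
  obtain ⟨top, htop, htop_max⟩ := U.exists_max_image f (card_pos.1 (by lia))
  have htop_rank : #{d ∈ U | f d < f top} + 1 = #U := by
    rw [← card_erase_add_one htop]
    congr 2
    ext d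
    rw [mem_filter, mem_erase, and_comm]
    refine and_congr_left fun hd => ⟨by rintro h rfl; exact h.false, fun hne => ?_⟩
    exact (htop_max d hd).lt_of_ne (hf.ne hd htop hne)
  obtain ⟨w, hw, hw_min⟩ := {w ∈ U | j ≤ #{d ∈ U | f d < f w} + g w}.exists_min_image f
    ⟨top, mem_filter.2 ⟨htop, by lia⟩⟩
  obtain ⟨hwU, hjw⟩ := mem_filter.1 hw
  refine ⟨w, hwU, hjw.antisymm' ?_⟩
  obtain hempty | hbelow := ({d ∈ U | f d < f w}).eq_empty_or_nonempty
  · rw [hempty, card_empty, zero_add]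
    exact hgj w hwU
  obtain ⟨pred, hpred, hpred_max⟩ := exists_max_image _ f hbelow
  obtain ⟨hpredU, hpred_lt⟩ := mem_filter.1 hpred
  have hpred_j : #{d ∈ U | f d < f pred} + g pred < j := by
    by_contra! h
    exact (hw_min pred (mem_filter.2 ⟨hpredU, h⟩)).not_gt hpred_lt
  have hrank : #{d ∈ U | f d < f w} ≤ #{d ∈ U | f d < f pred} + 1 := by
    refine (card_le_card fun d hd => ?_).trans (card_insert_le pred _)
    obtain rfl | hne := eq_or_ne d pred
    · exact mem_insert_self _ _
    · have hdU := (mem_filter.1 hd).1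
      exact mem_insert_of_mem (mem_filter.2
        ⟨hdU, (hpred_max d hd).lt_of_ne (hf.ne hdU hpredU hne)⟩)
  have := hg pred hpredU w hwU hpred_lt.le
  lia

lemma card_filter_not_extreme {S : Finset α} {f : α → β} (hf : Set.InjOn f S) :
    #{p ∈ S | (∃ a ∈ S, f a < f p) ∧ ∃ b ∈ S, f p < f b} = #S - 2 := by
  classical
  obtain rfl | hne := S.eq_empty_or_nonempty
  · rfl
  obtain ⟨lo, hlo, hmin⟩ := S.exists_min_image f hne
  obtain ⟨hi, hhi, hmax⟩ := S.exists_max_image f hne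
  have hlo_iff : ∀ p ∈ S, (∃ a ∈ S, f a < f p) ↔ p ≠ lo := fun p hp =>
    ⟨by rintro ⟨a, ha, hap⟩ rfl; exact (hmin a ha).not_gt hap,
      fun h => ⟨lo, hlo, (hmin p hp).lt_of_ne (hf.ne hlo hp h.symm)⟩⟩
  have hhi_iff : ∀ p ∈ S, (∃ b ∈ S, f p < f b) ↔ p ≠ hi := fun p hp =>
    ⟨by rintro ⟨b, hb, hpb⟩ rfl; exact (hmax b hb).not_gt hpb,
      fun h => ⟨hi, hhi, (hmax p hp).lt_of_ne (hf.ne hp hhi h)⟩⟩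
  have hfilter : {p ∈ S | (∃ a ∈ S, f a < f p) ∧ ∃ b ∈ S, f p < f b} = S \ {lo, hi} := by
    ext p
    rw [mem_filter, mem_sdiff, mem_insert, mem_singleton, not_or]
    exact and_congr_right fun hp => and_congr (hlo_iff p hp) (hhi_iff p hp)
  rw [hfilter, card_sdiff_of_subset (by simp [insert_subset_iff, hlo, hhi])]
  obtain rfl | hlohi := eq_or_ne lo hi
  · have hsub : S ⊆ {lo} := fun p hp => mem_singleton.2
      (hf hp hlo ((hmax p hp).antisymm (hmin p hp)))
    have := card_le_card hsub
    rw [card_singleton] at this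
    rw [pair_eq_singleton, card_singleton]
    lia
  · rw [card_pair hlohi]

/-- The cyclic rotation `(u, v, w) ↦ (v, w, u)` of triples. -/
def rotateTriple : α × α × α ≃ α × α × α :=
  (Equiv.prodComm α (α × α)).trans (Equiv.prodAssoc α α α)

lemma rotateTriple_apply (u v w : α) : rotateTriple (u, v, w) = (v, w, u) := rfl

/-- The first entry of the triple `t` lies strictly between the other two in the order given
by `f`. -/
def FirstIsMiddle (f : α → β) (t : α × α × α) : Prop :=
  (f t.2.1 < f t.1 ∧ f t.1 < f t.2.2) ∨ (f t.2.2 < f t.1 ∧ f t.1 < f t.2.1)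

instance (f : α → β) : DecidablePred (FirstIsMiddle f) :=
  fun _ => inferInstanceAs (Decidable (_ ∨ _))

variable [DecidableEq α]

lemma card_filter_card_erase_eq {S D P : Finset α} (hD : D ⊆ S) (hP : P ⊆ S)
    (hDP : Disjoint D P) (j : ℕ) :
    #{p ∈ S \ D | #(P.erase p) = j} =
      (if #P = j then #S - #D - j else 0) + (if #P = j + 1 then j + 1 else 0) := by
  have hPD : P ⊆ S \ D := subset_sdiff.2 ⟨hP, hDP.symm⟩
  have hout : #{p ∈ (S \ D) \ P | #(P.erase p) = j} = if #P = j then #S - #D - j else 0 := by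
    have herase : ∀ p ∈ (S \ D) \ P, #(P.erase p) = j ↔ #P = j := fun p hp => by
      rw [erase_eq_of_notMem (mem_sdiff.1 hp).2]
    rw [filter_congr herase]
    split_ifs with hj
    · simp only [hj, filter_true, card_sdiff_of_subset hPD, card_sdiff_of_subset hD]
    · simp only [hj, filter_false, card_empty]
  have hin : #{p ∈ P | #(P.erase p) = j} = if #P = j + 1 then j + 1 else 0 := by
    have herase : ∀ p ∈ P, #(P.erase p) = j ↔ #P = j + 1 := fun p hp => by
      rw [← card_erase_add_one hp, Nat.add_right_cancel_iff]
    rw [filter_congr herase]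
    split_ifs with hj
    · simp only [hj, filter_true]
    · simp only [hj, filter_false, card_empty]
  rw [← hout, ← hin, ← card_union_of_disjoint (disjoint_filter_filter sdiff_disjoint),
    ← filter_union, sdiff_union_of_subset hPD]

/-- The ordered triples of distinct elements of `S`. -/
def triples (S : Finset α) : Finset (α × α × α) :=
  {t ∈ S ×ˢ S ×ˢ S | t.1 ≠ t.2.1 ∧ t.1 ≠ t.2.2 ∧ t.2.1 ≠ t.2.2}

lemma mem_triples {S : Finset α} {u v w : α} :
    (u, v, w) ∈ triples S ↔ (u ∈ S ∧ v ∈ S ∧ w ∈ S) ∧ u ≠ v ∧ u ≠ w ∧ v ≠ w := by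
  simp only [triples, mem_filter, mem_product]

/-- The set of entries of a triple. -/
def entries (t : α × α × α) : Finset α := {t.1, t.2.1, t.2.2}

lemma entries_subset {S : Finset α} {t : α × α × α} (ht : t ∈ triples S) : entries t ⊆ S := by
  obtain ⟨u, v, w⟩ := t
  simp [entries, insert_subset_iff, mem_triples.1 ht]

lemma card_entries {S : Finset α} {t : α × α × α} (ht : t ∈ triples S) : #(entries t) = 3 := by
  obtain ⟨u, v, w⟩ := t
  obtain ⟨-, huv, huw, hvw⟩ := mem_triples.1 ht
  exact card_eq_three.2 ⟨u, v, w, huv, huw, hvw, rfl⟩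

lemma mem_triples_erase {S : Finset α} {p : α} {t : α × α × α} :
    t ∈ triples (S.erase p) ↔ t ∈ triples S ∧ p ∉ entries t := by
  obtain ⟨u, v, w⟩ := t
  simp only [mem_triples, entries, mem_erase, mem_insert, mem_singleton]
  grind

lemma rotateTriple_mem_triples {S : Finset α} {t : α × α × α} :
    rotateTriple t ∈ triples S ↔ t ∈ triples S := by
  obtain ⟨u, v, w⟩ := t
  rw [rotateTriple_apply, mem_triples, mem_triples]
  tauto

lemma sum_firstIsMiddle_rotateTriple {S : Finset α} {f : α → β}
    (hf : Set.InjOn f S) {t : α × α × α} (ht : t ∈ triples S) :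
    (if FirstIsMiddle f t then 1 else 0) + (if FirstIsMiddle f (rotateTriple t) then 1 else 0) +
      (if FirstIsMiddle f (rotateTriple (rotateTriple t)) then 1 else 0) = 1 := by
  obtain ⟨u, v, w⟩ := t
  obtain ⟨⟨hu, hv, hw⟩, huv, huw, hvw⟩ := mem_triples.1 ht
  have huv := hf.ne hu hv huv
  have huw := hf.ne hu hw huw
  have hvw := hf.ne hv hw hvw
  simp only [FirstIsMiddle, rotateTriple_apply]
  grind

lemma card_eq_three_mul_card_firstIsMiddle {S : Finset α} {f : α → β}
    (hf : Set.InjOn f S) {T : Finset (α × α × α)} (hT : T ⊆ triples S)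
    (hrot : ∀ t, t ∈ T ↔ rotateTriple t ∈ T) :
    #T = 3 * #{t ∈ T | FirstIsMiddle f t} := by
  have hsum_rot : ∀ g : α × α × α → ℕ, ∑ t ∈ T, g (rotateTriple t) = ∑ t ∈ T, g t := fun g =>
    sum_equiv rotateTriple hrot fun _ _ => rfl
  rw [card_eq_sum_ones, ← sum_congr rfl fun t ht => sum_firstIsMiddle_rotateTriple hf (hT ht),
    sum_add_distrib, sum_add_distrib,
    hsum_rot fun t => if FirstIsMiddle f (rotateTriple t) then 1 else 0,
    hsum_rot fun t => if FirstIsMiddle f t then 1 else 0, card_filter]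
  ring

lemma card_firstIsMiddle_eq_mul {S : Finset α} {f : α → β}
    (hf : Set.InjOn f S) {T : Finset (α × α × α)} (hT : T ⊆ triples S) {m : ℕ}
    (hmid : ∀ p ∈ S, (∃ a ∈ S, f a < f p) → (∃ b ∈ S, f p < f b) →
      #{t ∈ T | t.1 = p ∧ FirstIsMiddle f t} = m) :
    #{t ∈ T | FirstIsMiddle f t} = m * (#S - 2) := by
  have hmaps : Set.MapsTo Prod.fst (SetLike.coe {t ∈ T | FirstIsMiddle f t})
      (SetLike.coe {p ∈ S | (∃ a ∈ S, f a < f p) ∧ ∃ b ∈ S, f p < f b}) := by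
    rintro ⟨u, v, w⟩ ht
    obtain ⟨htT, hmiddle⟩ := mem_filter.1 ht
    obtain ⟨⟨hu, hv, hw⟩, -⟩ := mem_triples.1 (hT htT)
    exact mem_filter.2 ⟨hu, hmiddle.elim (fun h => ⟨⟨v, hv, h.1⟩, ⟨w, hw, h.2⟩⟩)
      fun h => ⟨⟨w, hw, h.1⟩, ⟨v, hv, h.2⟩⟩⟩
  rw [card_eq_sum_card_fiberwise (f := Prod.fst) hmaps, sum_const_nat (m := m),
    card_filter_not_extreme hf, mul_comm]
  intro p hp
  obtain ⟨hpS, hlt, hgt⟩ := mem_filter.1 hp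
  simp only [filter_filter, ← hmid p hpS hlt hgt, and_comm]

end Combinatorics

section Vectors

open Finset

variable {ι : Type*} {P : Finset ι} {x y z : ι → ℝ}

/-- The determinant of the three vectors `(x i, y i, z i)` for `i = a, b, d`. -/
def det3 (x y z : ι → ℝ) (a b d : ι) : ℝ :=
  x a * (y b * z d - y d * z b) - y a * (x b * z d - x d * z b) + z a * (x b * y d - x d * y b)

/-- The pair `(a, b)` is the upper bridge over the line `x = 0` of the planar points
`(x i / z i, y i / z i)`, `i ∈ P`: the edge of their upper hull that crosses this line. The points
are given by homogeneous coordinates with `z i > 0`. -/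
structure IsBridge (P : Finset ι) (x y z : ι → ℝ) (a b : ι) : Prop where
  left_mem : a ∈ P
  right_mem : b ∈ P
  left_neg : x a < 0
  right_pos : 0 < x b
  det3_nonpos : ∀ d ∈ P, det3 x y z a b d ≤ 0

/-- The bridge is the segment joining the two sides of the line that meets it highest: a point above
it could replace the endpoint on its own side and raise the crossing. -/
lemma exists_isBridge (hx : ∀ d ∈ P, x d ≠ 0) (hz : ∀ d ∈ P, 0 < z d)
    (hneg : ∃ a ∈ P, x a < 0) (hpos : ∃ b ∈ P, 0 < x b) : ∃ a b, IsBridge P x y z a b := by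
  obtain ⟨a₀, ha₀, hxa₀⟩ := hneg
  obtain ⟨b₀, hb₀, hxb₀⟩ := hpos
  obtain ⟨⟨a, b⟩, hab, hmax⟩ := {t ∈ P ×ˢ P | x t.1 < 0 ∧ 0 < x t.2}.exists_max_image
    (fun t => (x t.2 * y t.1 - x t.1 * y t.2) / (x t.2 * z t.1 - x t.1 * z t.2))
    ⟨(a₀, b₀), mem_filter.2 ⟨mk_mem_product ha₀ hb₀, hxa₀, hxb₀⟩⟩
  obtain ⟨hmem, hxa, hxb⟩ := mem_filter.1 hab
  obtain ⟨ha, hb⟩ := mem_product.1 hmem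
  have hden : ∀ p ∈ P, ∀ q ∈ P, x p < 0 → 0 < x q → 0 < x q * z p - x p * z q :=
    fun p hp q hq hxp hxq => by
      linarith [mul_pos hxq (hz p hp), mul_neg_of_neg_of_pos hxp (hz q hq)]
  have hcross : ∀ p ∈ P, ∀ q ∈ P, x p < 0 → 0 < x q →
      (x q * y p - x p * y q) * (x b * z a - x a * z b) ≤
        (x b * y a - x a * y b) * (x q * z p - x p * z q) := fun p hp q hq hxp hxq => by
    rw [← div_le_div_iff₀ (hden p hp q hq hxp hxq) (hden a ha b hb hxa hxb)]
    exact hmax (p, q) (mem_filter.2 ⟨mk_mem_product hp hq, hxp, hxq⟩)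
  refine ⟨a, b, ha, hb, hxa, hxb, fun d hd => ?_⟩
  obtain hxd | hxd := (hx d hd).lt_or_gt
  · refine nonpos_of_mul_nonpos_right ?_ hxb
    calc x b * det3 x y z a b d
        = (x b * y d - x d * y b) * (x b * z a - x a * z b) -
          (x b * y a - x a * y b) * (x b * z d - x d * z b) := by unfold det3; ring
      _ ≤ 0 := sub_nonpos.2 (hcross d hd b hb hxd hxb)
  · refine nonpos_of_mul_nonpos_right ?_ (neg_pos.2 hxa)
    calc -x a * det3 x y z a b d
        = (x d * y a - x a * y d) * (x b * z a - x a * z b) -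
          (x b * y a - x a * y b) * (x d * z a - x a * z d) := by unfold det3; ring
      _ ≤ 0 := sub_nonpos.2 (hcross a ha d hd hxa hxd)

/-- Two bridges meet `x = 0` at the same height, so the endpoints of each lie on the line through
the other. -/
lemma IsBridge.det3_eq_zero {a b a' b' : ι} (h : IsBridge P x y z a b)
    (h' : IsBridge P x y z a' b') : det3 x y z a b a' = 0 ∧ det3 x y z a b b' = 0 := by
  have ha' := mul_nonpos_of_nonneg_of_nonpos h'.right_pos.le (h.det3_nonpos a' h'.left_mem)
  have hb' := mul_nonneg_of_nonpos_of_nonpos h'.left_neg.le (h.det3_nonpos b' h'.right_mem)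
  have ha := mul_nonpos_of_nonneg_of_nonpos h.right_pos.le (h'.det3_nonpos a h.left_mem)
  have hb := mul_nonneg_of_nonpos_of_nonpos h.left_neg.le (h'.det3_nonpos b h.right_mem)
  have hsum : x b' * det3 x y z a b a' - x a' * det3 x y z a b b' +
      (x b * det3 x y z a' b' a - x a * det3 x y z a' b' b) = 0 := by
    unfold det3; ring
  exact ⟨(mul_eq_zero.1 (by linarith)).resolve_left h'.right_pos.ne',
    (mul_eq_zero.1 (by linarith)).resolve_left h'.left_neg.ne⟩

lemma IsBridge.unique {a b a' b' : ι} (h : IsBridge P x y z a b) (h' : IsBridge P x y z a' b')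
    (hdet : ∀ p ∈ P, ∀ q ∈ P, ∀ r ∈ P, p ≠ q → p ≠ r → q ≠ r → det3 x y z p q r ≠ 0) :
    a = a' ∧ b = b' := by
  have hne : ∀ {p q}, x p < 0 → 0 < x q → p ≠ q := by
    rintro p _ hp hq rfl
    exact hp.not_gt hq
  obtain ⟨ha', hb'⟩ := h.det3_eq_zero h'
  constructor
  · by_contra haa'
    exact hdet a h.left_mem b h.right_mem a' h'.left_mem (hne h.left_neg h.right_pos) haa'
      (hne h'.left_neg h.right_pos).symm ha'
  · by_contra hbb'
    exact hdet a h.left_mem b h.right_mem b' h'.right_mem (hne h.left_neg h.right_pos)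
      (hne h.left_neg h'.right_pos) hbb' hb'

lemma card_filter_nonpos_cross_pos_le {v w : ι} (hyv : 0 < y v) (hyw : 0 < y w)
    (hvw : x v / y v ≤ x w / y w) :
    #{d ∈ P | y d ≤ 0 ∧ 0 < x w * y d - x d * y w} ≤
      #{d ∈ P | y d ≤ 0 ∧ 0 < x v * y d - x d * y v} := by
  rw [div_le_div_iff₀ hyv hyw] at hvw
  refine card_le_card (monotone_filter_right P fun d _ ⟨hyd, hwd⟩ => ⟨hyd, ?_⟩)
  refine pos_of_mul_pos_right ?_ hyw.le
  calc 0 < y v * (x w * y d - x d * y w) + -y d * (x w * y v - x v * y w) :=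
        add_pos_of_pos_of_nonneg (mul_pos hyv hwd)
          (mul_nonneg (neg_nonneg.2 hyd) (sub_nonneg.2 hvw))
    _ = y w * (x v * y d - x d * y v) := by ring

/-- Order the vectors `w` of the open upper half-plane by `x w / y w`. The vectors of this
half-plane on the left of `w` are those below `w` in this order, and ever fewer of the remaining
vectors are on the left of `w` as `w` goes up. -/
lemma exists_card_cross_pos_eq {j : ℕ}
    (hcross : ∀ w ∈ P, ∀ d ∈ P, w ≠ d → x w * y d - x d * y w ≠ 0)
    (hfew : #{d ∈ P | y d ≤ 0} ≤ j) (hmany : j < #{d ∈ P | 0 < y d}) :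
    ∃ w ∈ P, #{d ∈ P | 0 < x w * y d - x d * y w} = j := by
  have hinj : Set.InjOn (fun d => x d / y d) (SetLike.coe {d ∈ P | 0 < y d}) := by
    intro w hw d hd hwd
    obtain ⟨hwP, hyw⟩ := mem_filter.1 hw
    obtain ⟨hdP, hyd⟩ := mem_filter.1 hd
    by_contra hne
    exact hcross w hwP d hdP hne (sub_eq_zero.2 ((div_eq_div_iff hyw.ne' hyd.ne').1 hwd))
  obtain ⟨w, hw, hwj⟩ := exists_rank_add_eq hinj
    (fun v hv w hw => card_filter_nonpos_cross_pos_le (mem_filter.1 hv).2 (mem_filter.1 hw).2)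
    (fun w _ => (card_le_card (monotone_filter_right P fun d _ h => h.1)).trans hfew) hmany
  obtain ⟨hwP, hyw⟩ := mem_filter.1 hw
  have hslope : ∀ d ∈ ({d ∈ P | 0 < y d} : Finset ι),
      (x d / y d < x w / y w ↔ 0 < x w * y d - x d * y w) := fun d hd => by
    rw [div_lt_div_iff₀ (mem_filter.1 hd).2 hyw, sub_pos]
  refine ⟨w, hwP, ?_⟩
  rw [← hwj, filter_congr hslope, filter_filter,
    ← card_filter_add_card_filter_not (s := {d ∈ P | 0 < x w * y d - x d * y w}) fun d => 0 < y d,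
    filter_filter, filter_filter]
  simp only [not_lt, and_comm]

end Vectors

lemma exists_closedBall_subset_of_mem {E : Type*} [SeminormedAddCommGroup E] [NormedSpace ℝ E]
    {u v c : E} {r : ℝ} (hu : u ∈ closedBall c r) (hv : v ∈ closedBall c r) :
    ∃ c', dist u c' = dist v c' ∧ closedBall c' (dist u c') ⊆ closedBall c r := by
  wlog h : dist v c ≤ dist u c generalizing u v
  · obtain ⟨c', heq, hsub⟩ := this hv hu (le_of_not_ge h)
    exact ⟨c', heq.symm, heq ▸ hsub⟩
  obtain ⟨c', hc', heq⟩ := (convex_segment u c).isPreconnected.intermediate_value₂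
    (left_mem_segment ℝ u c) (right_mem_segment ℝ u c) (f := (dist u ·)) (g := (dist v ·))
    (by fun_prop) (by fun_prop) (by simp) h
  refine ⟨c', heq, closedBall_subset_closedBall' ?_⟩
  rw [dist_add_dist_of_mem_segment hc']
  exact hu

section InCircle

open Finset

/-- Twice the signed area of the triangle `u v w`. -/
def orient (u v w : Pt) : ℝ := (v 0 - u 0) * (w 1 - u 1) - (v 1 - u 1) * (w 0 - u 0)

/-- The in-circle determinant: the orientation of the lifts of the four points to the paraboloid
`z = x² + y²`, in coordinates relative to `u`. -/
def inCirc (u v w d : Pt) : ℝ :=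
  det3 (fun p : Pt => p 0 - u 0) (fun p => p 1 - u 1) (fun p => dist p u ^ 2) v w d

lemma dist_sq_eq_add (p q : Pt) : dist p q ^ 2 = (p 0 - q 0) ^ 2 + (p 1 - q 1) ^ 2 := by
  simp only [EuclideanSpace.dist_sq_eq, Fin.sum_univ_two, Real.dist_eq, sq_abs]

lemma inCirc_rotate (u v w d : Pt) : inCirc v w u d = inCirc u v w d := by
  simp only [inCirc, det3, dist_sq_eq_add]; ring

lemma inCirc_swap (u v w d : Pt) : inCirc u w v d = -inCirc u v w d := by
  simp only [inCirc, det3]; ring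

lemma inCirc_eq_zero_of_mem_entries {u v w d : Pt} (hd : d ∈ entries (u, v, w)) :
    inCirc u v w d = 0 := by
  simp only [entries, mem_insert, mem_singleton] at hd
  simp only [inCirc, det3, dist_sq_eq_add]
  obtain rfl | rfl | rfl := hd <;> ring

lemma inCirc_eq_of_dist_eq {u v c : Pt} (h : dist u c = dist v c) (w d : Pt) :
    inCirc u v w d = orient u v w * (dist d c ^ 2 - dist u c ^ 2) -
      orient u v d * (dist w c ^ 2 - dist u c ^ 2) := by
  have hsq : dist u c ^ 2 = dist v c ^ 2 := by rw [h]
  simp only [inCirc, det3, orient, dist_sq_eq_add] at hsq ⊢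
  linear_combination -((w 0 - u 0) * (d 1 - u 1) - (w 1 - u 1) * (d 0 - u 0)) * hsq

/-- No four distinct points of `S` lie on a common circle or line: no four lifts to the paraboloid
are coplanar. -/
def CircGenPos (S : Set Pt) : Prop :=
  ∀ ⦃u v w d : Pt⦄, u ∈ S → v ∈ S → w ∈ S → d ∈ S →
    u ≠ v → u ≠ w → v ≠ w → d ∉ entries (u, v, w) → inCirc u v w d ≠ 0

lemma CircGenPos.mono {S T : Set Pt} (hS : CircGenPos S) (h : T ⊆ S) : CircGenPos T :=
  fun _ _ _ _ hu hv hw hd => hS (h hu) (h hv) (h hw) (h hd)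

lemma collinear_of_orient_eq_zero {u v w : Pt} (huv : u ≠ v) (h : orient u v w = 0) :
    Collinear ℝ {u, v, w} := by
  have hne : dist v u ^ 2 ≠ 0 := pow_ne_zero 2 (dist_ne_zero.2 huv.symm)
  rw [dist_sq_eq_add] at hne
  have hw : w = AffineMap.lineMap u v (((w 0 - u 0) * (v 0 - u 0) + (w 1 - u 1) * (v 1 - u 1)) /
      ((v 0 - u 0) ^ 2 + (v 1 - u 1) ^ 2)) := by
    unfold orient at h
    ext i
    fin_cases i <;>
      simp only [AffineMap.lineMap_apply, vsub_eq_sub, vadd_eq_add, PiLp.add_apply,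
        PiLp.smul_apply, PiLp.sub_apply, smul_eq_mul, Fin.zero_eta, Fin.mk_one] <;>
      field_simp
    · linear_combination -(v 1 - u 1) * h
    · linear_combination (v 0 - u 0) * h
  have hmem : w ∈ line[ℝ, u, v] := by
    rw [hw]
    exact AffineMap.lineMap_mem_affineSpan_pair _ _ _
  rw [Set.pair_comm v w, Set.insert_comm]
  exact (collinear_insert_iff_of_mem_affineSpan hmem).2 (collinear_pair ℝ u v)

lemma exists_dist_eq_of_not_collinear {u v w : Pt} (h : ¬Collinear ℝ {u, v, w}) :
    ∃ c, dist u c = dist v c ∧ dist u c = dist w c := by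
  obtain ⟨s, ⟨-, hs⟩, -⟩ := (affineIndependent_iff_not_collinear_set.2 h).existsUnique_dist_eq
  have hdist : ∀ i, dist (![u, v, w] i) s.center = s.radius := fun i => hs ⟨i, rfl⟩
  exact ⟨s.center, (hdist 0).trans (hdist 1).symm, (hdist 0).trans (hdist 2).symm⟩

lemma GenPos.circGenPos {S : Set Pt} (hS : GenPos S) : CircGenPos S := by
  intro u v w d hu hv hw hd huv huw hvw hdt hzero
  have hncol : ¬Collinear ℝ {u, v, w} := hS.1 {u, v, w}
    (by simp [Set.insert_subset_iff, hu, hv, hw])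
    (Set.ncard_eq_three.2 ⟨u, v, w, huv, huw, hvw, rfl⟩)
  have horient : orient u v w ≠ 0 := mt (collinear_of_orient_eq_zero huv) hncol
  obtain ⟨c, huvc, huwc⟩ := exists_dist_eq_of_not_collinear hncol
  have hudc : dist d c = dist u c := by
    rw [inCirc_eq_of_dist_eq huvc, huwc, sub_self, mul_zero, sub_zero] at hzero
    have hsq := sub_eq_zero.1 ((mul_eq_zero.1 hzero).resolve_left horient)
    rw [huwc]
    exact (sq_eq_sq₀ dist_nonneg dist_nonneg).1 hsq
  have hcard : ({d, u, v, w} : Set Pt).ncard = 4 := by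
    have hcoe : ({d, u, v, w} : Set Pt) = (insert d (entries (u, v, w)) : Finset Pt) := by
      simp [entries]
    rw [hcoe, Set.ncard_coe_finset, card_insert_of_notMem hdt, entries,
      card_eq_three.2 ⟨u, v, w, huv, huw, hvw, rfl⟩]
  refine hS.2 {d, u, v, w} (by simp [Set.insert_subset_iff, hd, hu, hv, hw]) hcard
    ⟨c, dist u c, ?_⟩
  rintro p (rfl | rfl | rfl | rfl)
  exacts [hudc, rfl, huvc.symm, huwc.symm]

end InCircle

section Levels

open Finset

/-- The points of `S` whose lifts to the paraboloid lie on the positive side of the plane through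
the lifts of the entries of `t`. -/
def posSide (S : Finset Pt) (t : Pt × Pt × Pt) : Finset Pt :=
  {d ∈ S | 0 < inCirc t.1 t.2.1 t.2.2 d}

/-- The triples of points of `S` of level `j`: the plane through their lifts to the paraboloid has
exactly `j` lifts of points of `S` on its positive side. Each such oriented plane is counted three
times, once for each rotation of the triple. -/
def levelTriples (S : Finset Pt) (j : ℕ) : Finset (Pt × Pt × Pt) :=
  {t ∈ triples S | #(posSide S t) = j}

variable {S : Finset Pt}

lemma posSide_rotateTriple (t : Pt × Pt × Pt) : posSide S (rotateTriple t) = posSide S t := by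
  simp only [posSide, ← inCirc_rotate t.1 t.2.1 t.2.2]
  rfl

lemma rotateTriple_mem_levelTriples {t : Pt × Pt × Pt} {j : ℕ} :
    rotateTriple t ∈ levelTriples S j ↔ t ∈ levelTriples S j := by
  simp only [levelTriples, mem_filter, rotateTriple_mem_triples, posSide_rotateTriple]

lemma disjoint_entries_posSide (t : Pt × Pt × Pt) : Disjoint (entries t) (posSide S t) :=
  disjoint_left.2 fun _ hd hpos => (mem_filter.1 hpos).2.ne' (inCirc_eq_zero_of_mem_entries hd)

lemma posSide_erase (p : Pt) (t : Pt × Pt × Pt) :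
    posSide (S.erase p) t = (posSide S t).erase p :=
  filter_erase _ _ _

/-- Deleting a point lowers by one the level of the triples with that point on their positive side,
destroys the triples that contain it and changes no other level. -/
lemma sum_card_levelTriples_erase (S : Finset Pt) (j : ℕ) :
    ∑ p ∈ S, #(levelTriples (S.erase p) j) =
      (#S - 3 - j) * #(levelTriples S j) + (j + 1) * #(levelTriples S (j + 1)) := by
  have hdelete : ∀ p, levelTriples (S.erase p) j =
      {t ∈ triples S | p ∉ entries t ∧ #((posSide S t).erase p) = j} := fun p => by
    ext t
    simp only [levelTriples, mem_filter, mem_triples_erase, posSide_erase, and_assoc]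
  have hcount : ∀ t ∈ triples S, #{p ∈ S | p ∉ entries t ∧ #((posSide S t).erase p) = j} =
      (if #(posSide S t) = j then #S - 3 - j else 0) +
        (if #(posSide S t) = j + 1 then j + 1 else 0) := fun t ht => by
    rw [← filter_filter, filter_notMem_eq_sdiff,
      card_filter_card_erase_eq (P := posSide S t) (entries_subset ht) (filter_subset _ S)
        (disjoint_entries_posSide t), card_entries ht]
  calc ∑ p ∈ S, #(levelTriples (S.erase p) j)
      = ∑ p ∈ S, #{t ∈ triples S | p ∉ entries t ∧ #((posSide S t).erase p) = j} := by
        simp only [hdelete]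
    _ = ∑ t ∈ triples S, #{p ∈ S | p ∉ entries t ∧ #((posSide S t).erase p) = j} :=
        sum_card_bipartiteAbove_eq_sum_card_bipartiteBelow _
    _ = _ := by
        rw [sum_congr rfl hcount, sum_add_distrib, ← sum_filter, ← sum_filter, sum_const, sum_const,
          smul_eq_mul, smul_eq_mul, mul_comm, mul_comm (#_) (j + 1)]
        rfl

/-- A linear functional on the plane; for generic `c` it orders the points of a finite set. -/
def sweep (c : ℝ) (p : Pt) : ℝ := p 0 + c * p 1

lemma exists_injOn_sweep (S : Finset Pt) : ∃ c, Set.InjOn (sweep c) S := by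
  obtain ⟨c, hc⟩ := Infinite.exists_notMem_finset
    ((S ×ˢ S).image fun t => (t.2 0 - t.1 0) / (t.1 1 - t.2 1))
  refine ⟨c, fun p hp q hq hpq => ?_⟩
  unfold sweep at hpq
  have h1 : p 1 = q 1 := by
    by_contra hne
    refine hc (mem_image.2 ⟨(p, q), mk_mem_product hp hq, ?_⟩)
    rw [div_eq_iff (sub_ne_zero.2 hne)]
    linear_combination -hpq
  ext i
  fin_cases i
  · rw [h1] at hpq
    exact add_right_cancel hpq
  · exact h1

lemma CircGenPos.inCirc_ne_zero (hS : CircGenPos S) {p q r d : Pt} (hp : p ∈ S) (hq : q ∈ S.erase p)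
    (hr : r ∈ S.erase p) (hd : d ∈ S.erase p) (hqr : q ≠ r) (hqd : q ≠ d) (hrd : r ≠ d) :
    inCirc p q r d ≠ 0 := by
  obtain ⟨hqp, hqS⟩ := mem_erase.1 hq
  obtain ⟨hrp, hrS⟩ := mem_erase.1 hr
  obtain ⟨hdp, hdS⟩ := mem_erase.1 hd
  exact hS hp hqS hrS hdS hqp.symm hrp.symm hqr (by simp [entries, hdp, hqd.symm, hrd.symm])

/-- Projecting centrally from the lift of `p` turns the faces at that lift into the edges of a
planar convex hull, among them one upper and one lower bridge over the sweep line through `p`. The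
sign of `e` selects one of the two. -/
lemma exists_forall_inCirc_nonpos_iff (hS : CircGenPos S) {c e : ℝ} (hc : Set.InjOn (sweep c) S)
    (he : e ≠ 0) {p : Pt} (hp : p ∈ S) (hlt : ∃ a ∈ S, sweep c a < sweep c p)
    (hgt : ∃ b ∈ S, sweep c p < sweep c b) :
    ∃ q ∈ S, ∃ r ∈ S, sweep c q < sweep c p ∧ sweep c p < sweep c r ∧
      ∀ q' ∈ S, ∀ r' ∈ S, sweep c q' < sweep c p → sweep c p < sweep c r' →
        ((∀ d ∈ S, e * inCirc p q' r' d ≤ 0) ↔ q' = q ∧ r' = r) := by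
  set x : Pt → ℝ := fun d => sweep c d - sweep c p
  set y : Pt → ℝ := fun d => e * (d 1 - p 1)
  set z : Pt → ℝ := fun d => dist d p ^ 2
  have hdet : ∀ q r d, det3 x y z q r d = e * inCirc p q r d := fun q r d => by
    simp only [x, y, z, det3, inCirc, sweep]
    ring
  have hmem : ∀ a ∈ S, sweep c a ≠ sweep c p → a ∈ S.erase p := fun a ha hne =>
    mem_erase.2 ⟨ne_of_apply_ne _ hne, ha⟩
  obtain ⟨a, ha, hap⟩ := hlt
  obtain ⟨b, hb, hpb⟩ := hgt
  obtain ⟨q, r, hqr⟩ := exists_isBridge (P := S.erase p) (x := x) (y := y) (z := z)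
    (fun d hd => sub_ne_zero.2 (hc.ne (mem_of_mem_erase hd) hp (ne_of_mem_erase hd)))
    (fun d hd => pow_pos (dist_pos.2 (ne_of_mem_erase hd)) 2)
    ⟨a, hmem a ha hap.ne, sub_neg.2 hap⟩ ⟨b, hmem b hb hpb.ne', sub_pos.2 hpb⟩
  refine ⟨q, mem_of_mem_erase hqr.left_mem, r, mem_of_mem_erase hqr.right_mem,
    sub_neg.1 hqr.left_neg, sub_pos.1 hqr.right_pos, fun q' hq' r' hr' hqp hpr => ⟨fun h => ?_, ?_⟩⟩
  · refine IsBridge.unique (P := S.erase p) (x := x) (y := y) (z := z)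
      ⟨hmem q' hq' hqp.ne, hmem r' hr' hpr.ne', sub_neg.2 hqp, sub_pos.2 hpr, fun d hd => ?_⟩ hqr ?_
    · exact (hdet q' r' d).trans_le (h d (mem_of_mem_erase hd))
    · intro i hi k hk l hl hik hil hkl
      rw [hdet]
      exact mul_ne_zero he (hS.inCirc_ne_zero hp hi hk hl hik hil hkl)
  · rintro ⟨rfl, rfl⟩ d hd
    obtain rfl | hdp := eq_or_ne d p
    · rw [inCirc_eq_zero_of_mem_entries (by simp [entries]), mul_zero]
    · exact (hdet q' r' d).symm.trans_le (hqr.det3_nonpos d (mem_erase.2 ⟨hdp, hd⟩))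

lemma mem_levelTriples_zero {u v w : Pt} :
    (u, v, w) ∈ levelTriples S 0 ↔ (u, v, w) ∈ triples S ∧ ∀ d ∈ S, inCirc u v w d ≤ 0 := by
  simp only [levelTriples, posSide, mem_filter, card_eq_zero, filter_eq_empty_iff, not_lt]

lemma card_levelTriples_zero_filter_firstIsMiddle (hS : CircGenPos S) {c : ℝ}
    (hc : Set.InjOn (sweep c) S) {p : Pt} (hp : p ∈ S) (hlt : ∃ a ∈ S, sweep c a < sweep c p)
    (hgt : ∃ b ∈ S, sweep c p < sweep c b) :
    #{t ∈ levelTriples S 0 | t.1 = p ∧ FirstIsMiddle (sweep c) t} = 2 := by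
  obtain ⟨q, hq, r, hr, hqp, hpr, hupper⟩ :=
    exists_forall_inCirc_nonpos_iff hS hc one_ne_zero hp hlt hgt
  obtain ⟨q', hq', r', hr', hqp', hpr', hlower⟩ :=
    exists_forall_inCirc_nonpos_iff hS hc (neg_ne_zero.2 one_ne_zero) hp hlt hgt
  simp only [one_mul, neg_one_mul, ← inCirc_swap] at hupper hlower
  have hmem : ∀ {a b}, a ∈ S → b ∈ S → sweep c a < sweep c p → sweep c p < sweep c b →
      (p, a, b) ∈ triples S ∧ (p, b, a) ∈ triples S := fun ha hb hap hpb => by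
    have hpa := ne_of_apply_ne _ hap.ne'
    have hpb' := ne_of_apply_ne _ hpb.ne
    have hab := ne_of_apply_ne _ (hap.trans hpb).ne
    exact ⟨mem_triples.2 ⟨⟨hp, ha, hb⟩, hpa, hpb', hab⟩,
      mem_triples.2 ⟨⟨hp, hb, ha⟩, hpb', hpa, hab.symm⟩⟩
  have hpair : {t ∈ levelTriples S 0 | t.1 = p ∧ FirstIsMiddle (sweep c) t} =
      {(p, q, r), (p, r', q')} := by
    ext ⟨u, v, w⟩
    simp only [mem_filter, mem_levelTriples_zero, mem_insert, mem_singleton, Prod.mk.injEq]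
    constructor
    · rintro ⟨⟨htriple, hlevel⟩, rfl, ⟨hvu, huw⟩ | ⟨hwu, huv⟩⟩
      all_goals obtain ⟨⟨-, hv, hw⟩, -⟩ := mem_triples.1 htriple
      · exact .inl ⟨rfl, (hupper v hv w hw hvu huw).1 hlevel⟩
      · exact .inr ⟨rfl, ((hlower w hw v hv hwu huv).1 hlevel).symm⟩
    · rintro (⟨rfl, rfl, rfl⟩ | ⟨rfl, rfl, rfl⟩)
      · exact ⟨⟨(hmem hq hr hqp hpr).1, (hupper v hq w hr hqp hpr).2 ⟨rfl, rfl⟩⟩, rfl,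
          .inl ⟨hqp, hpr⟩⟩
      · exact ⟨⟨(hmem hq' hr' hqp' hpr').2, (hlower w hq' v hr' hqp' hpr').2 ⟨rfl, rfl⟩⟩, rfl,
          .inr ⟨hqp', hpr'⟩⟩
  rw [hpair, card_pair]
  intro h
  obtain ⟨-, rfl, -⟩ := Prod.mk.injEq .. ▸ h
  exact hqp.not_gt hpr'

lemma card_levelTriples_zero (hS : CircGenPos S) : #(levelTriples S 0) = 6 * (#S - 2) := by
  obtain ⟨c, hc⟩ := exists_injOn_sweep S
  have hsub : levelTriples S 0 ⊆ triples S := filter_subset _ _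
  rw [card_eq_three_mul_card_firstIsMiddle hc hsub fun _ => rotateTriple_mem_levelTriples.symm,
    card_firstIsMiddle_eq_mul hc hsub fun _ =>
      card_levelTriples_zero_filter_firstIsMiddle hS hc]
  ring

theorem card_levelTriples (hS : CircGenPos S) (j : ℕ) :
    #(levelTriples S j) = 6 * (j + 1) * (#S - 2 - j) := by
  induction j generalizing S with
  | zero => rw [card_levelTriples_zero hS, Nat.sub_zero, zero_add, mul_one]
  | succ j ih =>
    have herase : ∑ p ∈ S, #(levelTriples (S.erase p) j) =
        #S * (6 * (j + 1) * (#S - 1 - 2 - j)) :=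
      sum_const_nat fun p hp => by
        rw [ih (hS.mono (coe_subset.2 (erase_subset p S))), card_erase_of_mem hp]
    rw [sum_card_levelTriples_erase, ih hS] at herase
    refine Nat.eq_of_mul_eq_mul_left j.succ_pos ?_
    obtain hlt | ⟨a, ha⟩ := (lt_or_ge #S (j + 3)).imp_right Nat.exists_eq_add_of_le
    · have h1 : #S - 1 - 2 - j = 0 := by lia
      have h2 : #S - 2 - (j + 1) = 0 := by lia
      rw [h1] at herase
      rw [h2]
      lia
    · have h1 : #S - 3 - j = a := by lia
      have h2 : #S - 2 - j = a + 1 := by lia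
      have h3 : #S - 1 - 2 - j = a := by lia
      have h4 : #S - 2 - (j + 1) = a := by lia
      rw [h1, h2, h3, ha] at herase
      rw [h4]
      linarith

end Levels

section Disks

open Finset

variable {S : Finset Pt} {j : ℕ} {u v : Pt}

lemma exists_mem_levelTriples_of_inCirc_eq_cross (hS : CircGenPos S) (hu : u ∈ S) (hv : v ∈ S)
    (huv : u ≠ v) {x y : Pt → ℝ} (hcross : ∀ w d, inCirc u v w d = x w * y d - x d * y w)
    (hfew : #{d ∈ S \ {u, v} | y d ≤ 0} ≤ j) (hj : 2 * j + 3 ≤ #S) :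
    ∃ w, (u, v, w) ∈ levelTriples S j := by
  have hmany : j < #{d ∈ S \ {u, v} | 0 < y d} := by
    have hsplit := card_filter_add_card_filter_not (s := S \ {u, v}) fun d => y d ≤ 0
    simp only [not_le] at hsplit
    have hle := le_card_sdiff {u, v} S
    rw [card_pair huv] at hle
    omega
  have hne : ∀ w ∈ S \ {u, v}, w ∈ S ∧ u ≠ w ∧ v ≠ w := fun w hw => by
    simp only [mem_sdiff, mem_insert, mem_singleton, not_or] at hw
    exact ⟨hw.1, Ne.symm hw.2.1, Ne.symm hw.2.2⟩
  obtain ⟨w, hw, hwj⟩ := exists_card_cross_pos_eq (fun w hw d hd hwd => by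
    obtain ⟨hwS, huw, hvw⟩ := hne w hw
    obtain ⟨hdS, hud, hvd⟩ := hne d hd
    rw [← hcross]
    exact hS hu hv hwS hdS huv huw hvw (by simp [entries, hud.symm, hvd.symm, hwd.symm]))
    hfew hmany
  obtain ⟨hwS, huw, hvw⟩ := hne w hw
  simp only [← hcross] at hwj
  have hpos : posSide S (u, v, w) = {d ∈ S \ {u, v} | 0 < inCirc u v w d} := by
    ext d
    simp only [posSide, mem_filter, mem_sdiff, and_assoc]
    refine and_congr_right fun _ => ⟨fun hd => ⟨fun hduv => ?_, hd⟩, And.right⟩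
    refine hd.ne' (inCirc_eq_zero_of_mem_entries ?_)
    simp only [entries, mem_insert, mem_singleton] at hduv ⊢
    tauto
  exact ⟨w, mem_filter.2 ⟨mem_triples.2 ⟨⟨hu, hv, hwS⟩, huv, huw, hvw⟩, by rw [hpos, hwj]⟩⟩

/-- Shrink the disk until `u` and `v` lie on its boundary. The plane through the lifts of `u` and
`v` that cuts out the shrunk disk rotates about their common line until exactly `j` lifts remain on
its positive side. -/
lemma exists_mem_levelTriples_of_closedBall (hS : CircGenPos S) (hu : u ∈ S) (hv : v ∈ S)
    (huv : u ≠ v) {c : Pt} {r : ℝ} (huc : u ∈ closedBall c r) (hvc : v ∈ closedBall c r)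
    (hfew : #{d ∈ S | dist d c ≤ r} ≤ j + 2) (hj : 2 * j + 3 ≤ #S) :
    ∃ w, (u, v, w) ∈ levelTriples S j := by
  obtain ⟨c', heq, hsub⟩ := exists_closedBall_subset_of_mem huc hvc
  refine exists_mem_levelTriples_of_inCirc_eq_cross hS hu hv huv (inCirc_eq_of_dist_eq heq) ?_ hj
  have hunion : {d ∈ S \ {u, v} | dist d c' ^ 2 - dist u c' ^ 2 ≤ 0} ∪ {u, v} ⊆
      {d ∈ S | dist d c ≤ r} := by
    refine union_subset (fun d hd => ?_) ?_
    · obtain ⟨hdS, hpow⟩ := mem_filter.1 hd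
      exact mem_filter.2 ⟨(mem_sdiff.1 hdS).1,
        hsub ((sq_le_sq₀ dist_nonneg dist_nonneg).1 (sub_nonpos.1 hpow))⟩
    · simp only [insert_subset_iff, singleton_subset_iff, mem_filter]
      exact ⟨⟨hu, huc⟩, hv, hvc⟩
  have hle := (card_le_card hunion).trans hfew
  rw [card_union_of_disjoint (sdiff_disjoint.mono_left (filter_subset _ _)), card_pair huv] at hle
  omega

lemma card_le_card_levelTriples {Q : Finset (Pt × Pt)}
    (hQ : ∀ q ∈ Q, ∃ w, (q.1, q.2, w) ∈ levelTriples S j) : #Q ≤ #(levelTriples S j) := by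
  refine (card_le_card fun q hq => ?_).trans
    (card_image_le (s := levelTriples S j) (f := fun t => (t.1, t.2.1)))
  obtain ⟨w, hw⟩ := hQ q hq
  exact mem_image.2 ⟨_, hw, rfl⟩

/-- If every bichromatic pair lies in a disk with at most `s + 1` points, then both of its orders
extend to triples of level `s - 1`, so `2 * #R * #B` is at most the number of such triples. -/
theorem exists_forall_closedBall_card {R B : Finset Pt} (hdisj : Disjoint R B)
    (hS : CircGenPos (R ∪ B : Finset Pt)) {s : ℕ} (hs : 2 * s < #(R ∪ B))
    (hcount : 3 * s * (#(R ∪ B) - 1 - s) < #R * #B) :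
    ∃ u ∈ R, ∃ v ∈ B, ∀ (c : Pt) (r : ℝ), u ∈ closedBall c r → v ∈ closedBall c r →
      s + 2 ≤ #{d ∈ R ∪ B | dist d c ≤ r} := by
  by_contra! hfew
  have hne : ∀ u ∈ R, ∀ v ∈ B, u ≠ v := fun u hu v hv => disjoint_iff_ne.1 hdisj u hu v hv
  obtain _ | j := s
  · obtain ⟨⟨u, v⟩, huv⟩ := card_pos.1 ((Nat.zero_le _).trans_lt hcount |>.trans_eq
      (card_product R B).symm)
    obtain ⟨hu, hv⟩ := mem_product.1 huv
    obtain ⟨c, r, huc, hvc, hcard⟩ := hfew u hu v hv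
    refine hcard.not_ge (le_of_eq_of_le (card_pair (hne u hu v hv)).symm (card_le_card ?_))
    simp only [insert_subset_iff, singleton_subset_iff, mem_filter, mem_union]
    exact ⟨⟨.inl hu, huc⟩, .inr hv, hvc⟩
  have hlevel : ∀ u ∈ R, ∀ v ∈ B, (∃ w, (u, v, w) ∈ levelTriples (R ∪ B) j) ∧
      ∃ w, (v, u, w) ∈ levelTriples (R ∪ B) j := fun u hu v hv => by
    obtain ⟨c, r, huc, hvc, hcard⟩ := hfew u hu v hv
    have huS := mem_union_left B hu
    have hvS := mem_union_right R hv
    have hle := Nat.le_of_lt_succ hcard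
    exact ⟨exists_mem_levelTriples_of_closedBall hS huS hvS (hne u hu v hv) huc hvc hle hs,
      exists_mem_levelTriples_of_closedBall hS hvS huS (hne u hu v hv).symm hvc huc hle hs⟩
  have hpairs : #(R ×ˢ B ∪ B ×ˢ R) ≤ #(levelTriples (R ∪ B) j) := by
    refine card_le_card_levelTriples fun q hq => ?_
    obtain hq | hq := mem_union.1 hq <;> obtain ⟨h₁, h₂⟩ := mem_product.1 hq
    · exact (hlevel _ h₁ _ h₂).1
    · exact (hlevel _ h₂ _ h₁).2
  have hprod : Disjoint (R ×ˢ B) (B ×ˢ R) := disjoint_product.2 (.inl hdisj)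
  have hsub : #(R ∪ B) - 1 - (j + 1) = #(R ∪ B) - 2 - j := by lia
  rw [card_union_of_disjoint hprod, card_product, card_product, card_levelTriples hS] at hpairs
  rw [hsub] at hcount
  linarith

end Disks

lemma twelve_mul_mul_sub_lt_of_lt_div {N s : ℕ} (hs : (s : ℝ) < N / (6 + √24)) :
    12 * s * (N - s) < N * N ∧ 2 * s < N := by
  have hsqrt : 0 ≤ √24 := Real.sqrt_nonneg 24
  have hsq : √24 ^ 2 = 24 := Real.sq_sqrt (by norm_num)
  have hlt : (6 + √24) * s < N := by rwa [lt_div_iff₀' (by positivity)] at hs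
  have h2s : 2 * s < N := by
    have hle : (2 : ℝ) * s ≤ (6 + √24) * s := by gcongr; linarith
    exact_mod_cast hle.trans_lt hlt
  have hlt' : (6 - √24) * s < N := by
    refine lt_of_le_of_lt ?_ hlt
    gcongr
    linarith
  have hmul : (12 : ℝ) * s * (N - s) < N * N :=
    calc (12 : ℝ) * s * (N - s)
        = N * N - (N - (6 + √24) * s) * (N - (6 - √24) * s) := by
          linear_combination -(s : ℝ) ^ 2 * hsq
      _ < N * N := sub_lt_self _ (mul_pos (sub_pos.2 hlt) (sub_pos.2 hlt'))
  refine ⟨?_, h2s⟩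
  rw [← Nat.cast_sub (by omega)] at hmul
  exact_mod_cast hmul

theorem pi_bichrom_lower_bound_n_over_11_general {R B : Set Pt} (hfinR : R.Finite)
    (hfinB : B.Finite) (hdisj : Disjoint R B) (hRB : R.ncard = B.ncard) (hne : R.Nonempty)
    (hgp : CircGenPos (R ∪ B)) :
    ∃ u ∈ R, ∃ v ∈ B, ∀ (c : Pt) (r : ℝ), u ∈ closedBall c r → v ∈ closedBall c r →
      ⌈((R ∪ B).ncard : ℝ) / (6 + √24)⌉ + 1 ≤ (((R ∪ B) ∩ closedBall c r).ncard : ℤ) := by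
  lift R to Finset Pt using hfinR
  lift B to Finset Pt using hfinB
  rw [Set.ncard_coe_finset, Set.ncard_coe_finset] at hRB
  rw [Finset.disjoint_coe] at hdisj
  rw [← Finset.coe_union] at hgp ⊢
  have hcard : (R ∪ B).card = R.card + R.card := by rw [Finset.card_union_of_disjoint hdisj, ← hRB]
  have hRpos : 0 < R.card := Finset.card_pos.2 (Finset.coe_nonempty.1 hne)
  obtain ⟨s, hs⟩ : ∃ s : ℕ, ⌈((R ∪ B).card : ℝ) / (6 + √24)⌉ = s + 1 := by
    have hceil : 0 < ⌈((R ∪ B).card : ℝ) / (6 + √24)⌉ := by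
      rw [Int.ceil_pos, hcard]
      positivity
    exact ⟨(⌈((R ∪ B).card : ℝ) / (6 + √24)⌉ - 1).toNat, by omega⟩
  obtain ⟨hlt, h2s⟩ := twelve_mul_mul_sub_lt_of_lt_div (N := (R ∪ B).card) (s := s)
    (by exact_mod_cast Int.lt_ceil.1 (hs ▸ lt_add_one (s : ℤ)))
  have hcount : 3 * s * ((R ∪ B).card - 1 - s) < R.card * B.card := by
    rw [← hRB]
    have hsq : (R ∪ B).card * (R ∪ B).card = 4 * (R.card * R.card) := by rw [hcard]; ring
    have hle : 3 * s * ((R ∪ B).card - 1 - s) ≤ 3 * s * ((R ∪ B).card - s) := by gcongr; omega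
    linarith
  obtain ⟨u, hu, v, hv, huv⟩ := exists_forall_closedBall_card hdisj hgp h2s hcount
  refine ⟨u, hu, v, hv, fun c r huc hvc => ?_⟩
  have hball : (↑(R ∪ B) ∩ closedBall c r : Set Pt) =
      ({d ∈ R ∪ B | dist d c ≤ r} : Finset Pt) := by
    ext d
    simp
  rw [Set.ncard_coe_finset, hs, hball, Set.ncard_coe_finset]
  exact_mod_cast huv c r huc hvc

/-- For every even `n ≥ 12` and every set of `n` points in the plane in general position
partitioned into `n/2` red points `R` and `n/2` blue points `B`, there exist a red point
`u ∈ R` and a blue point `v ∈ B` such that every closed disk containing both `u` and `v`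
contains at least `⌈n/(6+√26)⌉ + 1` points of the set. -/
theorem pi_bichrom_lower_bound_n_over_11 (n : ℕ) (hn : 12 ≤ n) (heven : Even n)
    (R B : Set Pt) (hfinR : R.Finite) (hfinB : B.Finite) (hdisj : Disjoint R B)
    (hR : R.ncard = n / 2) (hB : B.ncard = n / 2) (hgp : GenPos (R ∪ B)) :
    ∃ u ∈ R, ∃ v ∈ B,
      ∀ (c : Pt) (r : ℝ), 0 < r → u ∈ closedBall c r → v ∈ closedBall c r →
        ⌈(n : ℝ) / (6 + Real.sqrt 26)⌉ + 1 ≤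
          (((R ∪ B) ∩ closedBall c r).ncard : ℤ) := by
  have hcard : (R ∪ B).ncard = n := by
    rw [Set.ncard_union_eq hdisj hfinR hfinB, hR, hB, ← two_mul, Nat.two_mul_div_two_of_even heven]
  have hne : R.Nonempty := (Set.ncard_pos hfinR).1 (by omega)
  obtain ⟨u, hu, v, hv, huv⟩ := pi_bichrom_lower_bound_n_over_11_general hfinR hfinB hdisj
    (hR.trans hB.symm) hne hgp.circGenPos
  refine ⟨u, hu, v, hv, fun c r _ huc hvc => (add_le_add_left (Int.ceil_le_ceil ?_) 1).trans
    (huv c r huc hvc)⟩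
  rw [hcard]
  gcongr
  norm_num
end
end

section
/- For every even integer n ≥ 28, every set S of n points in the Euclidean plane in general position partitioned into a set R of n/2 red points and a set B of n/2 blue points, and every positive integer k with k < n/(14+2√43), there exist a red point u ∈ R and a blue point v ∈ B such that every closed disk having both u and v on its boundary contains at least k points of S in its open interior and leaves at least k points of S strictly outside the closed disk. -/
open EuclideanGeometry Metric

noncomputable section

/-!
Call a circle through three points of `S` a `k`-circle if one of its sides contains exactly `k - 1`
points of `S`. Suppose that some disk with `u` and `v` on its boundary has fewer than `k` points of
`S` inside (or outside). The circles through `u` and `v` form a pencil parametrized by `ℝ`, at one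
end of which that side contains at least `k` points. As the parameter space is connected and the
circles of the pencil meet at most one further point of `S`, some `k`-circle passes through `u` and
`v`.

On the other hand `k`-circles are rare. Fix a direction `e`. The equation of a circle through `v`,
normalized in the direction orthogonal to `e`, depends monotonically on its two parameters on each
side of the line through `v` on which `⟪e, ·⟫` is constant; hence two `k`-circles that have `v` as
the middle of their three points differ in the number of points on their distinguished side in one
of the two half-planes. This leaves at most `k` of them for each of the two signs of the
normalization, so at most `2 * k * n` in total.

A triple of points contains at most two bichromatic pairs. If every red-blue pair were on a
`k`-circle, then `|R| * |B| ≤ 4 * k * n`, which for `|R| = |B| = n / 2` means `n ≤ 16 * k`; this is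
impossible as `14 + 2√43 ≥ 16`.
-/

open scoped Finset RealInnerProductSpace EuclideanSpace

section DiscreteIntermediateValue

variable {X ι : Type*}

lemma setOf_le_card_filter_mem (Q : Finset ι) (A : ι → Set X) (k : ℕ)
    [∀ x, DecidablePred fun i ↦ x ∈ A i] :
    {x | k ≤ #{i ∈ Q | x ∈ A i}} = ⋃ T ∈ Q.powersetCard k, ⋂ i ∈ T, A i := by
  ext x
  simp only [Set.mem_ofPred_eq, Finset.le_card_iff_exists_subset_card, Finset.subset_iff,
    Finset.mem_filter, Set.mem_iUnion, Set.mem_iInter, Finset.mem_powersetCard, exists_prop]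
  grind

lemma exists_card_filter_mem_lt_le [TopologicalSpace X] [PreconnectedSpace X] {Q : Finset ι}
    {U C : ι → Set X} [∀ x, DecidablePred fun i ↦ x ∈ U i] [∀ x, DecidablePred fun i ↦ x ∈ C i]
    (hU : ∀ i ∈ Q, IsOpen (U i)) (hC : ∀ i ∈ Q, IsClosed (C i)) (hUC : ∀ i ∈ Q, U i ⊆ C i)
    {k : ℕ} {x₀ x₁ : X} (h₀ : #{i ∈ Q | x₀ ∈ U i} < k) (h₁ : k ≤ #{i ∈ Q | x₁ ∈ U i}) :
    ∃ x, #{i ∈ Q | x ∈ U i} < k ∧ k ≤ #{i ∈ Q | x ∈ C i} := by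
  by_contra! hcon
  have hUC_card (x : X) : #{i ∈ Q | x ∈ U i} ≤ #{i ∈ Q | x ∈ C i} :=
    Finset.card_le_card <| Finset.monotone_filter_right Q fun i hi ↦ @hUC i hi x
  have hopen : IsOpen {x | k ≤ #{i ∈ Q | x ∈ U i}} := by
    rw [setOf_le_card_filter_mem]
    exact isOpen_biUnion fun T hT ↦ isOpen_biInter_finset fun i hi ↦
      hU i ((Finset.mem_powersetCard.1 hT).1 hi)
  have hclosed : IsClosed {x | k ≤ #{i ∈ Q | x ∈ U i}} := by
    have heq : {x | k ≤ #{i ∈ Q | x ∈ U i}} = {x | k ≤ #{i ∈ Q | x ∈ C i}} :=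
      Set.ext fun x ↦ ⟨fun h ↦ h.trans (hUC_card x), fun h ↦ not_lt.1 fun h' ↦ (hcon x h').not_ge h⟩
    rw [heq, setOf_le_card_filter_mem]
    exact isClosed_biUnion_finset fun T hT ↦ isClosed_biInter fun i hi ↦
      hC i ((Finset.mem_powersetCard.1 hT).1 hi)
  have huniv := IsClopen.eq_univ ⟨hclosed, hopen⟩ ⟨x₁, h₁⟩
  exact h₀.not_ge (huniv ▸ Set.mem_univ x₀ : x₀ ∈ {x | k ≤ #{i ∈ Q | x ∈ U i}})

end DiscreteIntermediateValue

section Pencil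

variable {ι : Type*} {Q : Finset ι} {α β : ι → ℝ} {k : ℕ}

lemma exists_le_card_filter_add_mul_neg (α : ι → ℝ) (hβ : ∀ q ∈ Q, β q ≠ 0) (hk : 2 * k ≤ #Q) :
    ∃ t : ℝ, k ≤ #{q ∈ Q | α q + t * β q < 0} := by
  wlog h : k ≤ #{q ∈ Q | β q < 0} generalizing β
  · have hcompl : {q ∈ Q | ¬β q < 0} = {q ∈ Q | -β q < 0} :=
      Finset.filter_congr fun q hq ↦ by simp [(hβ q hq).symm.le_iff_lt]
    have hsum := Finset.card_filter_add_card_filter_not (s := Q) fun q ↦ β q < 0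
    rw [hcompl] at hsum
    obtain ⟨t, ht⟩ := this (β := fun q ↦ -β q) (fun q hq ↦ neg_ne_zero.2 (hβ q hq)) (by omega)
    exact ⟨-t, by simpa using ht⟩
  have heventually : ∀ᶠ t : ℝ in .atTop, ∀ q ∈ ({q ∈ Q | β q < 0} : Finset ι),
      α q + t * β q < 0 := by
    refine (Filter.eventually_all_finset _).2 fun q hq ↦ ?_
    exact (Filter.tendsto_atBot_add_const_left _ _ <|
      Filter.tendsto_id.atTop_mul_const_of_neg (Finset.mem_filter.1 hq).2).eventually_lt_atBot 0
  obtain ⟨t, ht⟩ := heventually.exists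
  exact ⟨t, h.trans <| Finset.card_le_card fun q hq ↦
    Finset.mem_filter.2 ⟨(Finset.mem_filter.1 hq).1, ht q hq⟩⟩

lemma exists_add_mul_eq_zero_and_card_neg_add_one_eq (hβ : ∀ q ∈ Q, β q ≠ 0)
    (hzero : ∀ t, #{q ∈ Q | α q + t * β q = 0} ≤ 1)
    (h₀ : #{q ∈ Q | α q < 0} < k) (hk : 2 * k ≤ #Q) :
    ∃ w ∈ Q, ∃ t, α w + t * β w = 0 ∧ #{q ∈ Q | α q + t * β q < 0} + 1 = k := by
  obtain ⟨t₁, h₁⟩ := exists_le_card_filter_add_mul_neg α hβ hk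
  have hcont (q : ι) : Continuous fun t ↦ α q + t * β q := by fun_prop
  obtain ⟨t, hneg, hnonpos⟩ := exists_card_filter_mem_lt_le (Q := Q) (x₀ := (0 : ℝ))
    (U := fun q ↦ {t | α q + t * β q < 0}) (C := fun q ↦ {t | α q + t * β q ≤ 0})
    (fun q _ ↦ isOpen_lt (hcont q) continuous_const)
    (fun q _ ↦ isClosed_le (hcont q) continuous_const) (fun _ _ _ ↦ le_of_lt (α := ℝ))
    (by simpa using h₀) h₁
  simp only [Set.mem_ofPred_eq] at hneg hnonpos
  have hsplit : #{q ∈ Q | α q + t * β q ≤ 0} =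
      #{q ∈ Q | α q + t * β q < 0} + #{q ∈ Q | α q + t * β q = 0} := by
    classical
    simp only [le_iff_lt_or_eq, Finset.filter_or]
    exact Finset.card_union_of_disjoint <| Finset.disjoint_filter.2 fun _ _ hlt ↦ hlt.ne
  have hone := hzero t
  obtain ⟨w, hw⟩ : ({q ∈ Q | α q + t * β q = 0} : Finset ι).Nonempty :=
    Finset.card_pos.1 (by omega)
  obtain ⟨hwQ, hwt⟩ := Finset.mem_filter.1 hw
  exact ⟨w, hwQ, t, hwt, by omega⟩

end Pencil

section TwoParameterFamily

variable {𝕜 ι : Type*} [Field 𝕜] [LinearOrder 𝕜] [IsStrictOrderedRing 𝕜] {ρ ℓ : ι → 𝕜}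

lemma card_filter_neg_lt_of_le {P : Finset ι} (hρ : ∀ q ∈ P, 0 < ρ q) (hℓ : ∀ q ∈ P, 0 < ℓ q)
    (h : ι → 𝕜) {y x y' x' : 𝕜} (hy : y ≤ y') (hx : x ≤ x') (hne : (y, x) ≠ (y', x'))
    (hzero : ∃ a ∈ P, y' * ρ a + x' * ℓ a + h a = 0) :
    #{q ∈ P | y' * ρ q + x' * ℓ q + h q < 0} < #{q ∈ P | y * ρ q + x * ℓ q + h q < 0} := by
  have hlt : ∀ q ∈ P, y * ρ q + x * ℓ q + h q < y' * ρ q + x' * ℓ q + h q := by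
    intro q hq
    rcases hy.lt_or_eq with hy' | rfl
    · linarith [mul_lt_mul_of_pos_right hy' (hρ q hq), mul_le_mul_of_nonneg_right hx (hℓ q hq).le]
    · have hx' : x < x' := hx.lt_of_ne fun hxx ↦ hne (by rw [hxx])
      linarith [mul_lt_mul_of_pos_right hx' (hℓ q hq)]
  obtain ⟨a, ha, ha₀⟩ := hzero
  refine Finset.card_lt_card <| Finset.ssubset_iff_of_subset
    (Finset.monotone_filter_right P fun q hq ↦ (hlt q hq).trans) |>.2 ⟨a, ?_, by simp [ha₀]⟩
  exact Finset.mem_filter.2 ⟨ha, (hlt a ha).trans_eq ha₀⟩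

lemma card_le_of_card_filter_neg_add_one_eq {P N : Finset ι}
    (hρP : ∀ q ∈ P, 0 < ρ q) (hℓP : ∀ q ∈ P, 0 < ℓ q)
    (hρN : ∀ q ∈ N, 0 < ρ q) (hℓN : ∀ q ∈ N, ℓ q < 0) (h : ι → 𝕜) {k : ℕ} {C : Finset (𝕜 × 𝕜)}
    (hP : ∀ c ∈ C, ∃ a ∈ P, c.1 * ρ a + c.2 * ℓ a + h a = 0)
    (hN : ∀ c ∈ C, ∃ b ∈ N, c.1 * ρ b + c.2 * ℓ b + h b = 0)
    (hk : ∀ c ∈ C, #{q ∈ P | c.1 * ρ q + c.2 * ℓ q + h q < 0} +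
      #{q ∈ N | c.1 * ρ q + c.2 * ℓ q + h q < 0} + 1 = k) :
    #C ≤ k := by
  rw [← Finset.card_range k]
  refine Finset.card_le_card_of_injOn (fun c ↦ #{q ∈ P | c.1 * ρ q + c.2 * ℓ q + h q < 0})
    (fun c hc ↦ Finset.mem_coe.2 <| Finset.mem_range.2 <| by grind [hk c hc]) ?_
  rintro ⟨y, x⟩ hc ⟨y', x'⟩ hc' hcard
  wlog hy : y ≤ y' generalizing y x y' x'
  · exact (this _ _ hc' _ _ hc hcard.symm (le_of_not_ge hy)).symm
  by_contra hne
  have hkc := hk _ hc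
  have hkc' := hk _ hc'
  dsimp only at hkc hkc' hcard
  -- On `P` the family increases with both parameters, on `N` with `y` and `-x`.
  rcases le_total x x' with hx | hx
  · have := card_filter_neg_lt_of_le hρP hℓP h hy hx hne (hP _ hc')
    omega
  · have := card_filter_neg_lt_of_le (ℓ := fun q ↦ -ℓ q) hρN (fun q hq ↦ neg_pos.2 (hℓN q hq)) h hy
      (neg_le_neg hx) (by simpa using hne) (by simpa using hN _ hc')
    simp only [neg_mul_neg] at this
    omega

end TwoParameterFamily

lemma exists_middle_of_injOn {ι α : Type*} [LinearOrder α] {g : ι → α} {T : Finset ι}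
    (hg : Set.InjOn g T) (hT : #T = 3) : ∃ a ∈ T, ∃ b ∈ T, ∃ v ∈ T, g b < g v ∧ g v < g a := by
  classical
  have hne : T.Nonempty := Finset.card_pos.1 (by omega)
  obtain ⟨a, ha, hmax⟩ := T.exists_max_image g hne
  obtain ⟨b, hb, hmin⟩ := T.exists_min_image g hne
  obtain ⟨v, hvT, hv⟩ := Finset.exists_mem_notMem_of_card_lt_card (s := {a, b}) (t := T)
    (Finset.card_le_two.trans_lt (by omega))
  simp only [Finset.mem_insert, Finset.mem_singleton, not_or] at hv
  exact ⟨a, ha, b, hb, v, hvT, (hmin v hvT).lt_of_ne fun h ↦ hv.2 (hg hvT hb h.symm),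
    (hmax v hvT).lt_of_ne fun h ↦ hv.1 (hg hvT ha h)⟩

section InnerProductSpace

variable {V : Type*} [NormedAddCommGroup V] [InnerProductSpace ℝ V]

section Plane

lemma exists_injOn_inner (S : Finset V) : ∃ e : V, Set.InjOn (fun q ↦ ⟪e, q⟫) S := by
  classical
  obtain ⟨e, he⟩ := Module.Dual.exists_forall_ne_zero_of_forall_exists
    (fun p : S.offDiag ↦ innerₗ V (p.1.1 - p.1.2)) fun p ↦
      ⟨p.1.1 - p.1.2, inner_self_ne_zero.2 <| sub_ne_zero.2 (Finset.mem_offDiag.1 p.2).2.2⟩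
  refine ⟨e, fun q hq q' hq' heq ↦ ?_⟩
  by_contra hne
  refine he ⟨(q, q'), Finset.mem_offDiag.2 ⟨hq, hq', hne⟩⟩ ?_
  simp only [innerₗ_apply_apply, inner_sub_left]
  rw [real_inner_comm, real_inner_comm e q']
  exact sub_eq_zero.2 heq

variable [Fact (Module.finrank ℝ V = 2)]

lemma exists_inner_eq_zero_and_smul_add_smul_eq {e : V} (he : e ≠ 0) :
    ∃ n : V, n ≠ 0 ∧ ⟪n, e⟫ = 0 ∧ ∀ a : V, ∃ x m : ℝ, x • e + m • n = a := by
  have : Fact (Module.finrank ℝ V = 1 + 1) := ‹Fact (Module.finrank ℝ V = 2)›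
  obtain ⟨n, hn, hspan⟩ :=
    finrank_eq_one_iff'.1 (Submodule.finrank_orthogonal_span_singleton (𝕜 := ℝ) he)
  refine ⟨n, by simpa using hn, ?_, fun a ↦ ?_⟩
  · exact Submodule.mem_orthogonal_singleton_iff_inner_left.1 n.2
  · obtain ⟨x, hx⟩ := Submodule.mem_span_singleton.1 ((ℝ ∙ e).starProjection_apply_mem a)
    obtain ⟨m, hm⟩ := hspan ⟨a - x • e, hx ▸ Submodule.sub_starProjection_mem_orthogonal a⟩
    exact ⟨x, m, by simp [show m • (n : V) = a - x • e from congrArg Subtype.val hm]⟩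

lemma collinear_of_inner_eq {n : V} (hn : n ≠ 0) {T : Set V} {c : ℝ} (hT : ∀ q ∈ T, ⟪n, q⟫ = c) :
    Collinear ℝ T := by
  have : Fact (Module.finrank ℝ V = 1 + 1) := ‹Fact (Module.finrank ℝ V = 2)›
  have : FiniteDimensional ℝ V := Module.finite_of_finrank_eq_succ ‹Fact (_ = 1 + 1)›.out
  have hle : vectorSpan ℝ T ≤ (ℝ ∙ n)ᗮ := by
    rw [vectorSpan_def, Submodule.span_le]
    rintro _ ⟨p, hp, q, hq, rfl⟩
    rw [SetLike.mem_coe, Submodule.mem_orthogonal_singleton_iff_inner_right]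
    simp [inner_sub_right, hT p hp, hT q hq]
  rw [collinear_iff_finrank_le_one]
  exact (Submodule.finrank_mono hle).trans_eq (Submodule.finrank_orthogonal_span_singleton hn)

end Plane

/-- The equation of a circle through `p`. For `s = 0` its zero set is a line instead, and the sign
of `s` decides whether the function is negative inside or outside the circle. -/
def circleFn (p : V) (s : ℝ) (a : V) (q : V) : ℝ :=
  s * ‖q - p‖ ^ 2 + ⟪a, q - p⟫

@[simp]
lemma circleFn_self (p : V) (s : ℝ) (a : V) : circleFn p s a p = 0 := by
  simp [circleFn]

lemma circleFn_add_smul (p : V) (s t : ℝ) (a n q : V) :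
    circleFn p s (a + t • n) q = circleFn p s a q + t * ⟪n, q - p⟫ := by
  simp only [circleFn, inner_add_left, real_inner_smul_left]
  ring

lemma circleFn_smul_add (p : V) (s x : ℝ) (e w q : V) :
    circleFn p s (x • e + w) q = s * ‖q - p‖ ^ 2 + x * ⟪e, q - p⟫ + ⟪w, q - p⟫ := by
  simp only [circleFn, inner_add_left, real_inner_smul_left]
  ring

lemma circleFn_mul_smul (p : V) (c s : ℝ) (a q : V) :
    circleFn p (c * s) (c • a) q = c * circleFn p s a q := by
  simp only [circleFn, real_inner_smul_left]
  ring

lemma circleFn_eq_add_circleFn (p v : V) (s : ℝ) (a q : V) :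
    circleFn p s a q = circleFn p s a v + circleFn v s (a + (2 * s) • (v - p)) q := by
  have hq : q - p = (v - p) + (q - v) := by abel
  simp only [circleFn, hq, norm_add_sq_real, inner_add_left, inner_add_right, real_inner_smul_left]
  ring

lemma circleFn_center (u c q : V) (s : ℝ) :
    circleFn u s (-(2 * s) • (c - u)) q = s * (dist q c ^ 2 - dist u c ^ 2) := by
  have hq : q - c = (q - u) - (c - u) := by abel
  rw [dist_comm u, dist_eq_norm, dist_eq_norm, hq, norm_sub_sq_real, circleFn,
    real_inner_smul_left, real_inner_comm]
  ring

lemma cospherical_of_circleFn_eq_zero {p : V} {s : ℝ} {a : V} (hs : s ≠ 0) {T : Set V}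
    (hT : ∀ q ∈ T, circleFn p s a q = 0) : Cospherical T := by
  refine ⟨p - (2 * s)⁻¹ • a, ‖(2 * s)⁻¹ • a‖, fun q hq ↦ ?_⟩
  have hq' : q - (p - (2 * s)⁻¹ • a) = (q - p) + (2 * s)⁻¹ • a := by abel
  have hzero : ‖q - p‖ ^ 2 + 2 * ⟪q - p, (2 * s)⁻¹ • a⟫ = 0 := by
    have := hT q hq
    rw [circleFn] at this
    rw [real_inner_smul_right, real_inner_comm]
    field_simp
    linarith
  rw [dist_eq_norm, hq', ← sq_eq_sq₀ (norm_nonneg _) (norm_nonneg _), norm_add_sq_real, hzero,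
    zero_add]

lemma card_filter_circleFn_eq_zero_le_three {S : Finset V} {p : V} {s : ℝ} {a : V}
    (hS : ∀ T ⊆ S, #T = 4 → ¬Cospherical (T : Set V)) (hs : s ≠ 0) :
    #{q ∈ S | circleFn p s a q = 0} ≤ 3 := by
  by_contra! hlt
  obtain ⟨T, hT, hT4⟩ := Finset.exists_subset_card_eq (Nat.succ_le_of_lt hlt)
  exact hS T (hT.trans (Finset.filter_subset _ S)) hT4 <|
    cospherical_of_circleFn_eq_zero hs fun q hq ↦ (Finset.mem_filter.1 (hT hq)).2

open Classical in
/-- The triples of points of `S` that lie on a `k`-circle, that is, on a circle with exactly `k - 1`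
points of `S` strictly on one of its sides; which side is encoded in the sign of `s`. -/
def kTriples (S : Finset V) (k : ℕ) : Finset (Finset V) :=
  {T ∈ S.powersetCard 3 | ∃ (p : V) (s : ℝ) (a : V), s ≠ 0 ∧ (∀ q ∈ T, circleFn p s a q = 0) ∧
    #{q ∈ S | circleFn p s a q < 0} + 1 = k}

open Classical in
/-- The triples of `S` with points on both sides of the line `⟪e, q - v⟫ = 0` that lie on a
`k`-circle through `v` whose equation has coefficient `1` at `⟪w, q - v⟫`. -/
def normalizedTriples (S : Finset V) (k : ℕ) (v e w : V) : Finset (Finset V) :=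
  {T ∈ S.powersetCard 3 | (∃ a ∈ T, 0 < ⟪e, a - v⟫) ∧ (∃ b ∈ T, ⟪e, b - v⟫ < 0) ∧
    ∃ c : ℝ × ℝ, c.1 ≠ 0 ∧ (∀ q ∈ T, circleFn v c.1 (c.2 • e + w) q = 0) ∧
      #{q ∈ S | circleFn v c.1 (c.2 • e + w) q < 0} + 1 = k}

lemma mem_kTriples {S T : Finset V} {k : ℕ} :
    T ∈ kTriples S k ↔ (T ⊆ S ∧ #T = 3) ∧ ∃ (p : V) (s : ℝ) (a : V), s ≠ 0 ∧
      (∀ q ∈ T, circleFn p s a q = 0) ∧ #{q ∈ S | circleFn p s a q < 0} + 1 = k := by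
  simp only [kTriples, Finset.mem_filter, Finset.mem_powersetCard]

lemma mem_normalizedTriples {S T : Finset V} {k : ℕ} {v e w : V} :
    T ∈ normalizedTriples S k v e w ↔ (T ⊆ S ∧ #T = 3) ∧
      (∃ a ∈ T, 0 < ⟪e, a - v⟫) ∧ (∃ b ∈ T, ⟪e, b - v⟫ < 0) ∧
      ∃ c : ℝ × ℝ, c.1 ≠ 0 ∧ (∀ q ∈ T, circleFn v c.1 (c.2 • e + w) q = 0) ∧
        #{q ∈ S | circleFn v c.1 (c.2 • e + w) q < 0} + 1 = k := by
  simp only [normalizedTriples, Finset.mem_filter, Finset.mem_powersetCard]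

lemma coefficient_ne_zero_of_circleFn_eq_zero {e w v a b : V} {s x m : ℝ} (hs : s ≠ 0)
    (ha : 0 < ⟪e, a - v⟫) (hb : ⟪e, b - v⟫ < 0)
    (ha₀ : circleFn v s (x • e + m • w) a = 0) (hb₀ : circleFn v s (x • e + m • w) b = 0) :
    m ≠ 0 := by
  rintro rfl
  rw [zero_smul, circleFn_smul_add, inner_zero_left, add_zero] at ha₀ hb₀
  have hav : 0 < ‖a - v‖ ^ 2 := by
    refine pow_pos (norm_pos_iff.2 ?_) 2
    rintro h
    simp [h] at ha
  have helim : s * (‖a - v‖ ^ 2 * -⟪e, b - v⟫ + ‖b - v‖ ^ 2 * ⟪e, a - v⟫) = 0 := by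
    linear_combination -⟪e, b - v⟫ * ha₀ + ⟪e, a - v⟫ * hb₀
  refine (mul_ne_zero hs (ne_of_gt ?_)) helim
  exact add_pos_of_pos_of_nonneg (mul_pos hav (neg_pos.2 hb)) (by positivity)

lemma mem_normalizedTriples_or_neg {S T : Finset V} {k : ℕ} {v e w a b : V}
    (hw : ∀ a : V, ∃ x m : ℝ, x • e + m • w = a) (hT : T ∈ kTriples S k) (hv : v ∈ T)
    (ha : a ∈ T) (hb : b ∈ T) (hva : 0 < ⟪e, a - v⟫) (hvb : ⟪e, b - v⟫ < 0) :
    T ∈ normalizedTriples S k v e w ∨ T ∈ normalizedTriples S k v e (-w) := by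
  obtain ⟨hTS, p, s, a', hs, hzero, hcard⟩ := mem_kTriples.1 hT
  obtain ⟨x, m, hxm⟩ := hw (a' + (2 * s) • (v - p))
  have hbase : circleFn p s a' = circleFn v s (x • e + m • w) := by
    ext q
    rw [circleFn_eq_add_circleFn p v, hzero v hv, zero_add, hxm]
  rw [hbase] at hzero hcard
  have hm := coefficient_ne_zero_of_circleFn_eq_zero hs hva hvb (hzero a ha) (hzero b hb)
  have hmem {w' : V} (hw' : |m|⁻¹ • m • w = w') : T ∈ normalizedTriples S k v e w' := by
    have hscale : circleFn v (|m|⁻¹ * s) ((|m|⁻¹ * x) • e + w') =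
        fun q ↦ |m|⁻¹ * circleFn v s (x • e + m • w) q := by
      ext q
      rw [← circleFn_mul_smul, smul_add, hw', mul_smul]
    have hpos : 0 < |m|⁻¹ := inv_pos.2 (abs_pos.2 hm)
    refine mem_normalizedTriples.2 ⟨hTS, ⟨a, ha, hva⟩, ⟨b, hb, hvb⟩, (|m|⁻¹ * s, |m|⁻¹ * x),
      mul_ne_zero hpos.ne' hs, fun q hq ↦ ?_, ?_⟩
    · simp only [hscale, hzero q hq, mul_zero]
    · simpa only [hscale, mul_neg_iff, hpos, hpos.not_gt, true_and, false_and, or_false] using hcard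
  rcases hm.lt_or_gt with hneg | hpos
  · exact .inr <| hmem <| by rw [abs_of_neg hneg, smul_smul, inv_neg, neg_mul,
      inv_mul_cancel₀ hm, neg_one_smul]
  · exact .inl <| hmem <| by rw [abs_of_pos hpos, smul_smul, inv_mul_cancel₀ hm, one_smul]

lemma card_filter_neg_add_card_filter_neg {S : Finset V} {e v : V}
    (he : Set.InjOn (fun q ↦ ⟪e, q⟫) S) (hv : v ∈ S) {f : V → ℝ} (hf : f v = 0) :
    #{q ∈ {q ∈ S | 0 < ⟪e, q - v⟫} | f q < 0} + #{q ∈ {q ∈ S | ⟪e, q - v⟫ < 0} | f q < 0} =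
      #{q ∈ S | f q < 0} := by
  have hneg : {q ∈ {q ∈ S | f q < 0} | ¬0 < ⟪e, q - v⟫} =
      {q ∈ {q ∈ S | f q < 0} | ⟪e, q - v⟫ < 0} := by
    refine Finset.filter_congr fun q hq ↦ ?_
    obtain ⟨hqS, hfq⟩ := Finset.mem_filter.1 hq
    refine not_lt.trans (Ne.le_iff_lt fun h ↦ hfq.ne ?_)
    rw [inner_sub_right, sub_eq_zero] at h
    rw [he hqS hv h, hf]
  rw [Finset.filter_comm, Finset.filter_comm (fun q ↦ ⟪e, q - v⟫ < 0), ← hneg,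
    Finset.card_filter_add_card_filter_not]

lemma card_normalizedTriples_le {S : Finset V} {e v : V}
    (hS : ∀ T ⊆ S, #T = 4 → ¬Cospherical (T : Set V))
    (he : Set.InjOn (fun q ↦ ⟪e, q⟫) S) (hv : v ∈ S) (k : ℕ) (w : V) :
    #(normalizedTriples S k v e w) ≤ k := by
  classical
  have hparam (T : Finset V) (hT : T ∈ normalizedTriples S k v e w) :=
    (mem_normalizedTriples.1 hT).2.2.2
  choose! c hc_ne hc_zero hc_card using hparam
  have hT_eq (T : Finset V) (hT : T ∈ normalizedTriples S k v e w) :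
      T = {q ∈ S | circleFn v (c T).1 ((c T).2 • e + w) q = 0} := by
    obtain ⟨⟨hTS, hT3⟩, -⟩ := mem_normalizedTriples.1 hT
    exact Finset.eq_of_subset_of_card_le
      (fun q hq ↦ Finset.mem_filter.2 ⟨hTS hq, hc_zero T hT q hq⟩)
      ((card_filter_circleFn_eq_zero_le_three hS (hc_ne T hT)).trans_eq hT3.symm)
  have hc_inj : Set.InjOn c (normalizedTriples S k v e w) := fun T hT T' hT' h ↦ by
    rw [hT_eq T hT, h, ← hT_eq T' hT']
  have hρ {q : V} (hq : ⟪e, q - v⟫ ≠ 0) : 0 < ‖q - v‖ ^ 2 :=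
    pow_pos (norm_pos_iff.2 fun h ↦ hq (by rw [h, inner_zero_right])) 2
  rw [← Finset.card_image_of_injOn hc_inj]
  refine card_le_of_card_filter_neg_add_one_eq
    (P := {q ∈ S | 0 < ⟪e, q - v⟫}) (N := {q ∈ S | ⟪e, q - v⟫ < 0})
    (ρ := fun q ↦ ‖q - v‖ ^ 2) (ℓ := fun q ↦ ⟪e, q - v⟫)
    (fun q hq ↦ hρ (Finset.mem_filter.1 hq).2.ne') (fun q hq ↦ (Finset.mem_filter.1 hq).2)
    (fun q hq ↦ hρ (Finset.mem_filter.1 hq).2.ne) (fun q hq ↦ (Finset.mem_filter.1 hq).2)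
    (fun q ↦ ⟪w, q - v⟫) ?_ ?_ ?_ <;>
  simp only [Finset.forall_mem_image, ← circleFn_smul_add] <;> intro T hT <;>
  obtain ⟨⟨hTS, -⟩, ⟨a, ha, hva⟩, ⟨b, hb, hvb⟩, -⟩ := mem_normalizedTriples.1 hT
  · exact ⟨a, Finset.mem_filter.2 ⟨hTS ha, hva⟩, hc_zero T hT a ha⟩
  · exact ⟨b, Finset.mem_filter.2 ⟨hTS hb, hvb⟩, hc_zero T hT b hb⟩
  · rw [card_filter_neg_add_card_filter_neg he hv (circleFn_self _ _ _), hc_card T hT]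

lemma card_kTriples_le [Fact (Module.finrank ℝ V = 2)] {S : Finset V}
    (hS : ∀ T ⊆ S, #T = 4 → ¬Cospherical (T : Set V)) (k : ℕ) :
    #(kTriples S k) ≤ #S * (2 * k) := by
  classical
  obtain ⟨e, he⟩ := exists_injOn_inner S
  have hmiddle (T : Finset V) (hT : T ∈ kTriples S k) :
      ∃ a ∈ T, ∃ b ∈ T, ∃ v ∈ T, ⟪e, b - v⟫ < 0 ∧ 0 < ⟪e, a - v⟫ := by
    obtain ⟨⟨hTS, hT3⟩, -⟩ := mem_kTriples.1 hT
    simpa only [inner_sub_right, sub_neg, sub_pos] using exists_middle_of_injOn (he.mono hTS) hT3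
  rcases (kTriples S k).eq_empty_or_nonempty with hempty | ⟨T₀, hT₀⟩
  · simp [hempty]
  have he_ne : e ≠ 0 := by
    rintro rfl
    obtain ⟨a, -, b, -, v, -, hlt, -⟩ := hmiddle T₀ hT₀
    simp at hlt
  obtain ⟨w, -, -, hw⟩ := exists_inner_eq_zero_and_smul_add_smul_eq he_ne
  have hcover : kTriples S k ⊆
      S.biUnion fun v ↦ normalizedTriples S k v e w ∪ normalizedTriples S k v e (-w) := by
    intro T hT
    obtain ⟨a, ha, b, hb, v, hv, hvb, hva⟩ := hmiddle T hT
    exact Finset.mem_biUnion.2 ⟨v, (mem_kTriples.1 hT).1.1 hv,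
      Finset.mem_union.2 (mem_normalizedTriples_or_neg hw hT hv ha hb hva hvb)⟩
  refine (Finset.card_le_card hcover).trans <| Finset.card_biUnion_le_card_mul _ _ _ fun v hv ↦ ?_
  calc #(normalizedTriples S k v e w ∪ normalizedTriples S k v e (-w))
      ≤ #(normalizedTriples S k v e w) + #(normalizedTriples S k v e (-w)) :=
        Finset.card_union_le _ _
    _ ≤ k + k := add_le_add (card_normalizedTriples_le hS he hv k w)
        (card_normalizedTriples_le hS he hv k (-w))
    _ = 2 * k := (two_mul k).symm

end InnerProductSpace

section EraseTwo

variable {ι : Type*} [DecidableEq ι] {S : Finset ι} {u v : ι}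

lemma card_erase_erase_add_two (hu : u ∈ S) (hv : v ∈ S) (huv : u ≠ v) :
    #((S.erase u).erase v) + 2 = #S := by
  rw [← Finset.card_erase_add_one hu,
    ← Finset.card_erase_add_one (Finset.mem_erase.2 ⟨huv.symm, hv⟩)]

lemma filter_erase_erase_of_not {p : ι → Prop} [DecidablePred p] (hu : ¬p u) (hv : ¬p v) :
    {q ∈ (S.erase u).erase v | p q} = {q ∈ S | p q} := by
  rw [Finset.filter_erase, Finset.filter_erase, Finset.erase_eq_of_notMem (a := u) (by simp [hu]),
    Finset.erase_eq_of_notMem (by simp [hv])]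

lemma card_filter_erase_erase_add_two {p : ι → Prop} [DecidablePred p] (hu : u ∈ S) (hv : v ∈ S)
    (huv : u ≠ v) (hpu : p u) (hpv : p v) :
    #{q ∈ (S.erase u).erase v | p q} + 2 = #{q ∈ S | p q} := by
  rw [Finset.filter_erase, Finset.filter_erase]
  exact card_erase_erase_add_two (Finset.mem_filter.2 ⟨hu, hpu⟩) (Finset.mem_filter.2 ⟨hv, hpv⟩) huv

end EraseTwo

section GeneralPosition

lemma GenPos.not_cospherical {S : Finset Pt} (hS : GenPos S) {T : Finset Pt} (hT : T ⊆ S)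
    (hT4 : #T = 4) : ¬Cospherical (T : Set Pt) :=
  hS.2 T (Finset.coe_subset.2 hT) (by rw [Set.ncard_coe_finset, hT4])

lemma GenPos.inner_ne_zero {S : Set Pt} (hS : GenPos S) {n u v q : Pt} (hn : n ≠ 0)
    (hu : u ∈ S) (hv : v ∈ S) (hq : q ∈ S) (huv : u ≠ v) (hqu : q ≠ u) (hqv : q ≠ v)
    (hnv : ⟪n, v - u⟫ = 0) : ⟪n, q - u⟫ ≠ 0 := by
  intro hnq
  refine hS.1 {u, v, q} (by simp [Set.insert_subset_iff, hu, hv, hq])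
    (Set.ncard_eq_three.2 ⟨u, v, q, huv, hqu.symm, hqv.symm, rfl⟩)
    (collinear_of_inner_eq hn (c := ⟪n, u⟫) ?_)
  rw [inner_sub_right, sub_eq_zero] at hnv hnq
  simp [hnv, hnq]

lemma exists_mem_kTriples_of_card_lt {S : Finset Pt} (hS : GenPos S) {k : ℕ} (hk : 2 * k + 2 ≤ #S)
    {u v : Pt} (hu : u ∈ S) (hv : v ∈ S) (huv : u ≠ v) {s : ℝ} (hs : s ≠ 0) {a : Pt}
    (hav : circleFn u s a v = 0) (hlt : #{q ∈ S | circleFn u s a q < 0} < k) :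
    ∃ T ∈ kTriples S k, u ∈ T ∧ v ∈ T := by
  classical
  obtain ⟨n, hn, hnv, -⟩ := exists_inner_eq_zero_and_smul_add_smul_eq (sub_ne_zero.2 huv.symm)
  have hzero_v (t : ℝ) : circleFn u s (a + t • n) v = 0 := by
    rw [circleFn_add_smul, hav, hnv, mul_zero, add_zero]
  set Q := (S.erase u).erase v with hQ
  have hQ_card : #Q + 2 = #S := card_erase_erase_add_two hu hv huv
  have hneg (t : ℝ) : #{q ∈ Q | circleFn u s (a + t • n) q < 0} =
      #{q ∈ S | circleFn u s (a + t • n) q < 0} := by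
    rw [hQ, filter_erase_erase_of_not (p := fun q ↦ circleFn u s (a + t • n) q < 0) (by simp)
      (by simp [hzero_v])]
  have hzero (t : ℝ) : #{q ∈ Q | circleFn u s (a + t • n) q = 0} ≤ 1 := by
    have hle := card_filter_circleFn_eq_zero_le_three (p := u) (a := a + t • n)
      (fun _ ↦ hS.not_cospherical) hs
    rw [← card_filter_erase_erase_add_two hu hv huv (circleFn_self _ _ _) (hzero_v t),
      ← hQ] at hle
    omega
  simp only [circleFn_add_smul] at hneg hzero
  obtain ⟨w, hw, t, hwt, hcard⟩ := exists_add_mul_eq_zero_and_card_neg_add_one_eq (Q := Q)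
    (fun q hq ↦ by
      simp only [hQ, Finset.mem_erase] at hq
      exact hS.inner_ne_zero hn hu hv hq.2.2 huv hq.2.1 hq.1 hnv)
    hzero (by simpa using (hneg 0).trans_lt (by simpa using hlt)) (by omega)
  simp only [hQ, Finset.mem_erase] at hw
  refine ⟨{u, v, w}, mem_kTriples.2 ⟨⟨?_, ?_⟩, u, s, a + t • n, hs, ?_, ?_⟩, by simp, by simp⟩
  · simp [Finset.insert_subset_iff, hu, hv, hw.2.2]
  · exact Finset.card_eq_three.2 ⟨u, v, w, huv, hw.2.1.symm, hw.1.symm, rfl⟩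
  · simp [hzero_v, circleFn_add_smul u s t a n w, hwt]
  · simpa only [circleFn_add_smul, ← hneg t] using hcard

lemma le_card_filter_sq_dist_lt {S : Finset Pt} (hS : GenPos S) {k : ℕ} (hk : 2 * k + 2 ≤ #S)
    {u v : Pt} (hu : u ∈ S) (hv : v ∈ S) (huv : u ≠ v) (hT : ∀ T ∈ kTriples S k, u ∈ T → v ∉ T)
    {s : ℝ} (hs : s ≠ 0) {c : Pt} (hc : dist u c = dist v c) :
    k ≤ #{q ∈ S | s * (dist q c ^ 2 - dist u c ^ 2) < 0} := by
  by_contra! hlt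
  simp only [← circleFn_center] at hlt
  obtain ⟨T, hTk, huT, hvT⟩ := exists_mem_kTriples_of_card_lt hS hk hu hv huv hs
    (by rw [circleFn_center, hc, sub_self, mul_zero]) hlt
  exact hT T hTk huT hvT

end GeneralPosition

section Counting

lemma card_inter_mul_card_inter_le_two {ι : Type*} [DecidableEq ι] {R B T : Finset ι}
    (h : Disjoint R B) (hT : #T = 3) : #(T ∩ R) * #(T ∩ B) ≤ 2 := by
  have hle : #(T ∩ R) + #(T ∩ B) ≤ 3 := by
    rw [← hT, ← Finset.card_union_of_disjoint <|
        h.mono Finset.inter_subset_right Finset.inter_subset_right,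
      ← Finset.inter_union_distrib_left]
    exact Finset.card_le_card Finset.inter_subset_left
  have : #(T ∩ R) ≤ 3 := by omega
  interval_cases #(T ∩ R) <;> omega

lemma card_mul_card_le_card_mul_two {ι : Type*} {R B : Finset ι} (h : Disjoint R B)
    {𝒯 : Finset (Finset ι)} (h𝒯 : ∀ T ∈ 𝒯, #T = 3)
    (hcover : ∀ u ∈ R, ∀ v ∈ B, ∃ T ∈ 𝒯, u ∈ T ∧ v ∈ T) : #R * #B ≤ #𝒯 * 2 := by
  classical
  have hsub : R ×ˢ B ⊆ 𝒯.biUnion fun T ↦ (T ∩ R) ×ˢ (T ∩ B) := by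
    rintro ⟨u, v⟩ huv
    obtain ⟨hu, hv⟩ := Finset.mem_product.1 huv
    obtain ⟨T, hT, huT, hvT⟩ := hcover u hu v hv
    exact Finset.mem_biUnion.2 ⟨T, hT, Finset.mem_product.2
      ⟨Finset.mem_inter.2 ⟨huT, hu⟩, Finset.mem_inter.2 ⟨hvT, hv⟩⟩⟩
  rw [← Finset.card_product]
  refine (Finset.card_le_card hsub).trans <| Finset.card_biUnion_le_card_mul _ _ _ fun T hT ↦ ?_
  rw [Finset.card_product]
  exact card_inter_mul_card_inter_le_two h (h𝒯 T hT)

lemma exists_forall_kTriples_notMem [DecidableEq Pt] {R B : Finset Pt} (hdisj : Disjoint R B)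
    (hgp : GenPos (R ∪ B : Finset Pt)) {k : ℕ} (h : 4 * k * #(R ∪ B) < #R * #B) :
    ∃ u ∈ R, ∃ v ∈ B, ∀ T ∈ kTriples (R ∪ B) k, u ∈ T → v ∉ T := by
  by_contra! hcover
  have htriples : #(kTriples (R ∪ B) k) ≤ #(R ∪ B) * (2 * k) :=
    card_kTriples_le (fun _ ↦ hgp.not_cospherical) k
  have hpairs : #R * #B ≤ #(kTriples (R ∪ B) k) * 2 :=
    card_mul_card_le_card_mul_two hdisj (fun T hT ↦ (mem_kTriples.1 hT).1.2) hcover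
  linarith

end Counting

lemma two_mul_add_two_le_add_of_four_mul_mul_add_lt {k a b : ℕ}
    (h : 4 * k * (a + b) < a * b) : 2 * k + 2 ≤ a + b := by
  have ha : 0 < a := Nat.pos_of_mul_pos_right (Nat.zero_lt_of_lt h)
  have hb : 0 < b := Nat.pos_of_mul_pos_left (Nat.zero_lt_of_lt h)
  have hsq : 16 * k * (a + b) < (a + b) * (a + b) := by
    linarith [four_mul_le_pow_two_add a b]
  have hk : 16 * k < a + b := lt_of_mul_lt_mul_right hsq (Nat.zero_le _)
  omega

theorem pi_bichrom_in_out_lower_bound_general (R B : Set Pt) (hdisj : Disjoint R B)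
    (hgp : GenPos (R ∪ B)) (k : ℕ) (h : 4 * k * (R ∪ B).ncard < R.ncard * B.ncard) :
    ∃ u ∈ R, ∃ v ∈ B,
      ∀ (c : Pt) (r : ℝ), 0 < r → dist u c = r → dist v c = r →
        k ≤ ((R ∪ B) ∩ ball c r).ncard ∧
        k ≤ ((R ∪ B) ∩ {x | r < dist x c}).ncard := by
  classical
  have hcard_pos : 0 < R.ncard * B.ncard := Nat.zero_lt_of_lt h
  lift R to Finset Pt using Set.finite_of_ncard_pos (Nat.pos_of_mul_pos_right hcard_pos)
  lift B to Finset Pt using Set.finite_of_ncard_pos (Nat.pos_of_mul_pos_left hcard_pos)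
  rw [Finset.disjoint_coe] at hdisj
  rw [← Finset.coe_union] at hgp h ⊢
  simp only [Set.ncard_coe_finset] at h
  have hk : 2 * k + 2 ≤ #(R ∪ B) := by
    rw [Finset.card_union_of_disjoint hdisj] at h ⊢
    exact two_mul_add_two_le_add_of_four_mul_mul_add_lt h
  obtain ⟨u, hu, v, hv, hT⟩ := exists_forall_kTriples_notMem hdisj hgp h
  refine ⟨u, hu, v, hv, fun c r hr huc hvc ↦ ?_⟩
  have hle {s : ℝ} (hs : s ≠ 0) := le_card_filter_sq_dist_lt hgp hk
    (Finset.mem_union_left B hu) (Finset.mem_union_right R hv)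
    (hdisj.forall_ne_finset hu hv) hT hs (huc.trans hvc.symm)
  simp only [← Set.ncard_coe_finset, Finset.coe_filter] at hle
  constructor
  · convert hle one_ne_zero using 2
    ext x
    simp [huc, pow_lt_pow_iff_left₀ dist_nonneg hr.le two_ne_zero]
  · convert hle (neg_ne_zero.2 one_ne_zero) using 2
    ext x
    simp [huc, pow_lt_pow_iff_left₀ hr.le dist_nonneg two_ne_zero]

/-- For every even `n ≥ 28`, every set of `n` points in the plane in general position
partitioned into `n/2` red points `R` and `n/2` blue points `B`, and every positive
integer `k` with `k < n/(14 + 2√43)`, there exist a red point `u ∈ R` and a blue point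
`v ∈ B` such that every closed disk having both `u` and `v` on its boundary contains at
least `k` points of the set in its open interior and leaves at least `k` points of the
set strictly outside. -/
theorem pi_bichrom_in_out_lower_bound (n : ℕ) (hn : 28 ≤ n) (heven : Even n)
    (R B : Set Pt) (hfinR : R.Finite) (hfinB : B.Finite) (hdisj : Disjoint R B)
    (hR : R.ncard = n / 2) (hB : B.ncard = n / 2) (hgp : GenPos (R ∪ B))
    (k : ℕ) (hk : 0 < k)
    (hineq : (k : ℝ) < (n : ℝ) / (14 + 2 * Real.sqrt 43)) :
    ∃ u ∈ R, ∃ v ∈ B,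
      ∀ (c : Pt) (r : ℝ), 0 < r → dist u c = r → dist v c = r →
        k ≤ ((R ∪ B) ∩ ball c r).ncard ∧
        k ≤ ((R ∪ B) ∩ {x | r < dist x c}).ncard := by
  obtain ⟨l, rfl⟩ := heven
  have hk16 : 16 * k < l + l := by
    have h43 : (1 : ℝ) ≤ √43 := Real.one_le_sqrt.2 (by norm_num)
    rw [lt_div_iff₀ (by positivity)] at hineq
    exact_mod_cast (show (16 * k : ℝ) < ((l + l : ℕ) : ℝ) by nlinarith)
  refine pi_bichrom_in_out_lower_bound_general R B hdisj hgp k ?_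
  rw [Set.ncard_union_eq hdisj hfinR hfinB, hR, hB, show (l + l) / 2 = l by omega]
  nlinarith
end
end

section
/- For every even integer n ≥ 6 there exists a set S of n points in the Euclidean plane in general position, partitioned into a set R of n/2 red points and a set B of n/2 blue points, such that for every red point u ∈ R and every blue point v ∈ B there is a closed disk containing both u and v that contains at most ⌈n/5⌉ + 1 points of S. -/
/-!
Put five clusters of `s = ⌈n/5⌉` slots at the centre and at the four rim positions of a wheel.  Red
points occupy only the centre, north and south, blue points only the centre, east and west, so no
red-blue pair joins opposite rim positions: it either lies in the centre or joins the two ends of an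
edge of the Delaunay graph of the wheel.

Draw each cluster as a very short segment: vertical at the centre, horizontal on the rim.  For every
edge of the wheel, a disk tangent to the segment at one end meets the cluster there only in the
point of tangency; choosing it so as to contain the position at the other end and none of the other
three, it catches at most `1 + s` points.

Containing two given points in a disk with at most `N` points is an open condition, because the disk
can be inflated slightly.  Configurations in general position are dense, since a new point only has
to avoid finitely many lines and circles, a null set.  Hence the clusters can be perturbed into
general position.
-/

open EuclideanGeometry Metric

noncomputable section

open Filter MeasureTheory Module Topology

/-! ### General position is generic -/

section AlmostEverywhere

variable {V : Type*} [MeasurableSpace V]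

lemma ae_not_collinear_insert_pair [NormedAddCommGroup V] [NormedSpace ℝ V] [BorelSpace V]
    [FiniteDimensional ℝ V] (μ : Measure V) [μ.IsAddHaarMeasure] (hV : 1 < finrank ℝ V)
    {a b : V} (hab : a ≠ b) : ∀ᵐ x ∂μ, ¬Collinear ℝ {x, a, b} := by
  have line_ne_top : line[ℝ, a, b] ≠ ⊤ := fun h => by
    have hle : finrank ℝ (line[ℝ, a, b]).direction ≤ 1 := by
      rw [direction_affineSpan]
      exact collinear_iff_finrank_le_one.1 (collinear_pair ℝ a b)
    rw [h, AffineSubspace.direction_top, finrank_top] at hle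
    exact hle.not_gt hV
  filter_upwards [compl_mem_ae_iff.2 (Measure.addHaar_affineSubspace μ _ line_ne_top)]
    with x hx hcol
  exact hx (hcol.mem_affineSpan_of_mem_of_ne (by simp) (by simp) (by simp) hab)

lemma ae_not_cospherical_insert_triple [NormedAddCommGroup V] [InnerProductSpace ℝ V]
    [BorelSpace V] (μ : Measure V) [μ.IsAddHaarMeasure] (hV : finrank ℝ V = 2)
    {a b c : V} (hab : a ≠ b) (hac : a ≠ c) (hbc : b ≠ c) :
    ∀ᵐ x ∂μ, ¬Cospherical {x, a, b, c} := by
  have : FiniteDimensional ℝ V := .of_finrank_eq_succ hV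
  have : Nontrivial V := ⟨a, b, hab⟩
  by_cases h : Cospherical {a, b, c}
  · obtain ⟨o, r, habc⟩ := h
    filter_upwards [compl_mem_ae_iff.2 (Measure.addHaar_sphere μ o r)] with x hx ⟨o₂, r₂, hx₂⟩
    -- Two distinct circles have at most two common points.
    have same_circle : (⟨o₂, r₂⟩ : Sphere V) = ⟨o, r⟩ := by
      by_contra hne
      exact (eq_of_mem_sphere_of_mem_sphere_of_finrank_eq_two hV hne hab
        (hx₂ a (by simp)) (hx₂ b (by simp)) (hx₂ c (by simp))
        (habc a (by simp)) (habc b (by simp)) (habc c (by simp))).elim hac.symm hbc.symm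
    obtain ⟨rfl, rfl⟩ := Sphere.mk.inj same_circle
    exact hx (hx₂ x (by simp))
  · exact .of_forall fun x hx => h (hx.subset (Set.subset_insert _ _))

end AlmostEverywhere

lemma forall_subset_insert_ncard_eq_succ {α : Type*} {P : Set α → Prop} {S : Set α} {x : α}
    {k : ℕ} (hS : ∀ T ⊆ S, T.ncard = k + 1 → P T)
    (hx : ∀ T ⊆ S, T.ncard = k → P (insert x T)) :
    ∀ T ⊆ insert x S, T.ncard = k + 1 → P T := by
  intro T hT hcard
  by_cases hxT : x ∈ T
  · rw [← Set.insert_sdiff_self_of_mem hxT]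
    refine hx _ (Set.sdiff_singleton_subset_iff.2 hT) ?_
    rw [Set.ncard_sdiff_singleton_of_mem hxT, hcard, Nat.add_sub_cancel]
  · exact hS T ((Set.subset_insert_iff_of_notMem hxT).1 hT) hcard

lemma genPos_empty : GenPos ∅ := by
  constructor <;>
  · intro T hT hcard
    simp [Set.subset_empty_iff.1 hT] at hcard

lemma GenPos.mono {S T : Set Pt} (hT : GenPos T) (hST : S ⊆ T) : GenPos S :=
  ⟨fun U hU => hT.1 U (hU.trans hST), fun U hU => hT.2 U (hU.trans hST)⟩

lemma GenPos.ae_insert {S : Set Pt} (hS : GenPos S) (hfin : S.Finite) :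
    ∀ᵐ x, GenPos (insert x S) := by
  have line_avoided : ∀ᵐ x : Pt, ∀ T ⊆ S, T.ncard = 2 → ¬Collinear ℝ (insert x T) := by
    refine (ae_ball_iff hfin.finite_subsets.countable).2 fun T _ => eventually_all.2 fun hT => ?_
    obtain ⟨a, b, hab, rfl⟩ := Set.ncard_eq_two.1 hT
    exact ae_not_collinear_insert_pair volume (by simp) hab
  have circle_avoided : ∀ᵐ x : Pt, ∀ T ⊆ S, T.ncard = 3 → ¬Cospherical (insert x T) := by
    refine (ae_ball_iff hfin.finite_subsets.countable).2 fun T _ => eventually_all.2 fun hT => ?_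
    obtain ⟨a, b, c, hab, hac, hbc, rfl⟩ := Set.ncard_eq_three.1 hT
    exact ae_not_cospherical_insert_triple volume (by simp) hab hac hbc
  filter_upwards [line_avoided, circle_avoided] with x hline hcircle
  exact ⟨forall_subset_insert_ncard_eq_succ hS.1 hline,
    forall_subset_insert_ncard_eq_succ hS.2 hcircle⟩

lemma dense_setOf_injective_and_genPos_range (ι : Type*) [Finite ι] :
    Dense {p : ι → Pt | p.Injective ∧ GenPos (Set.range p)} := by
  classical
  have := Fintype.ofFinite ι
  suffices H : ∀ s : Finset ι, Dense {p : ι → Pt | Set.InjOn p s ∧ GenPos (p '' s)} by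
    simpa using H Finset.univ
  intro s
  induction s using Finset.induction_on with
  | empty => simp [genPos_empty]
  | insert i s hi ih =>
    refine (ih.mono ?_).of_closure
    rintro p ⟨hinj, hgen⟩
    have hfin : (p '' s).Finite := s.finite_toSet.image p
    have hdense : Dense {x | x ∉ p '' s ∧ GenPos (insert x (p '' s))} :=
      Measure.dense_of_ae ((hfin.countable.ae_notMem volume).and (hgen.ae_insert hfin))
    rw [← Function.update_eq_self i p]
    refine map_mem_closure (f := Function.update p i) (by fun_prop) (hdense (p i)) ?_
    rintro x ⟨hx, hxgen⟩
    have heq : Set.EqOn (Function.update p i x) p s := fun j hj =>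
      Function.update_of_ne (ne_of_mem_of_not_mem hj hi) _ _
    have himage : Function.update p i x '' s = p '' s := heq.image_eq
    refine ⟨?_, ?_⟩
    · rw [Finset.coe_insert, Set.injOn_insert (by simpa using hi), himage, Function.update_self]
      exact ⟨hinj.congr heq.symm, hx⟩
    · rwa [Finset.coe_insert, Set.image_insert_eq, himage, Function.update_self]

/-! ### Disks containing few points -/

section SmallDisk

variable {ι E : Type*} [PseudoMetricSpace E]

/-- Some closed disk contains the points `p i` and `p j` and at most `N` points of the
configuration `p`, counted as indices. -/
def HasSmallDisk (p : ι → E) (N : ℕ) (i j : ι) : Prop :=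
  ∃ (c : E) (r : ℝ), 0 < r ∧ p i ∈ closedBall c r ∧ p j ∈ closedBall c r ∧
    (p ⁻¹' closedBall c r).ncard ≤ N

lemma HasSmallDisk.symm {p : ι → E} {N : ℕ} {i j : ι} (h : HasSmallDisk p N i j) :
    HasSmallDisk p N j i :=
  let ⟨c, r, hr, hi, hj, hcard⟩ := h
  ⟨c, r, hr, hj, hi, hcard⟩

variable [Finite ι]

lemma HasSmallDisk.of_subset {p : ι → E} {N : ℕ} {i j : ι} {c : E} {r : ℝ} {A : Set ι}
    (hr : 0 < r) (hi : dist (p i) c ≤ r) (hj : dist (p j) c ≤ r)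
    (hA : ∀ k ∉ A, r < dist (p k) c) (hN : A.ncard ≤ N) : HasSmallDisk p N i j :=
  ⟨c, r, hr, hi, hj, (Set.ncard_le_ncard (fun k hk => by_contra fun hkA =>
    (hA k hkA).not_ge hk) A.toFinite).trans hN⟩

lemma isOpen_setOf_hasSmallDisk (N : ℕ) (i j : ι) :
    IsOpen {p : ι → E | HasSmallDisk p N i j} := by
  refine isOpen_iff_mem_nhds.2 fun p ⟨c, r, hr, hi, hj, hcard⟩ => ?_
  obtain ⟨R, hrR : r < R, hR⟩ :
      ∃ R > r, ∀ k ∉ p ⁻¹' closedBall c r, R < dist (p k) c := by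
    have inflate : ∀ᶠ R in 𝓝[>] r, ∀ k ∉ p ⁻¹' closedBall c r, R < dist (p k) c :=
      eventually_all.2 fun k => eventually_all.2 fun hk =>
        nhdsWithin_le_nhds (eventually_lt_nhds (not_le.1 hk))
    exact (eventually_mem_nhdsWithin.and inflate).exists
  have hcont (k : ι) : Continuous fun q : ι → E => dist (q k) c := by fun_prop
  have houtside : ∀ᶠ q in 𝓝 p, ∀ k ∉ p ⁻¹' closedBall c r, R < dist (q k) c :=
    eventually_all.2 fun k => eventually_all.2 fun hk =>
      (hcont k).continuousAt.eventually_const_lt (hR k hk)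
  filter_upwards [(hcont i).continuousAt.eventually_lt_const (hi.trans_lt hrR),
    (hcont j).continuousAt.eventually_lt_const (hj.trans_lt hrR), houtside] with q hqi hqj hqk
  exact .of_subset (hr.trans hrR) hqi.le hqj.le hqk hcard

lemma HasSmallDisk.exists_ncard_inter_closedBall_le {p : ι → E} {N : ℕ} {i j : ι}
    {S : Set E} (h : HasSmallDisk p N i j) (hS : S ⊆ Set.range p) :
    ∃ (c : E) (r : ℝ), 0 < r ∧ p i ∈ closedBall c r ∧ p j ∈ closedBall c r ∧
      (S ∩ closedBall c r).ncard ≤ N := by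
  obtain ⟨c, r, hr, hi, hj, hcard⟩ := h
  refine ⟨c, r, hr, hi, hj, ?_⟩
  calc (S ∩ closedBall c r).ncard
      ≤ (p '' (p ⁻¹' closedBall c r)).ncard := by
        rw [Set.image_preimage_eq_range_inter]
        exact Set.ncard_le_ncard (Set.inter_subset_inter_left _ hS)
    _ ≤ (p ⁻¹' closedBall c r).ncard := Set.ncard_image_le (Set.toFinite _)
    _ ≤ N := hcard

end SmallDisk

lemma exists_injective_genPos_hasSmallDisk {ι : Type*} [Finite ι] {p : ι → Pt} {N : ℕ}
    {r : ι → ι → Prop} (hp : ∀ i j, r i j → HasSmallDisk p N i j) :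
    ∃ q : ι → Pt, q.Injective ∧ GenPos (Set.range q) ∧ ∀ i j, r i j → HasSmallDisk q N i j := by
  have hnear : ∀ᶠ q in 𝓝 p, ∀ i j, r i j → HasSmallDisk q N i j := by
    simp only [eventually_all]
    exact fun i j hij => (isOpen_setOf_hasSmallDisk N i j).mem_nhds (hp i j hij)
  obtain ⟨q, ⟨hinj, hgen⟩, hq⟩ :=
    (dense_setOf_injective_and_genPos_range ι).inter_nhds_nonempty hnear
  exact ⟨q, hinj, hgen, hq⟩

/-! ### Clusters on short segments -/

section Cluster

variable {ι σ V : Type*} [NormedAddCommGroup V] [InnerProductSpace ℝ V]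

/-- The configuration with cluster assignment `cl` in which the points of cluster `X` lie on the
line through the position `x X` with direction `d X`; the point `k` sits at parameter `δ * t k`, so
that `δ = 0` collapses the clusters to their positions. -/
def clusterConfig (x d : σ → V) (cl : ι → σ) (t : ι → ℝ) (δ : ℝ) (k : ι) : V :=
  x (cl k) + (δ * t k) • d (cl k)

/-- The position `Y` can be reached from `X` by a disk tangent at `x X` to the line with direction
`d X`, centred at `x X + n`, which avoids the remaining positions. -/
def ReachedByTangentDisk (x d : σ → V) (X Y : σ) : Prop :=
  ∃ n : V, inner ℝ (d X) n = 0 ∧ dist (x Y) (x X + n) < ‖n‖ ∧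
    ∀ Z, Z ≠ X → Z ≠ Y → ‖n‖ < dist (x Z) (x X + n)

lemma dist_add_lt_norm_iff {x y n : V} :
    dist y (x + n) < ‖n‖ ↔ ‖y - x‖ ^ 2 < 2 * inner ℝ (y - x) n := by
  rw [dist_eq_norm, ← sub_sub, ← sq_lt_sq₀ (norm_nonneg _) (norm_nonneg _), norm_sub_sq_real]
  constructor <;> intro h <;> linarith

lemma norm_lt_dist_add_iff {x y n : V} :
    ‖n‖ < dist y (x + n) ↔ 2 * inner ℝ (y - x) n < ‖y - x‖ ^ 2 := by
  rw [dist_eq_norm, ← sub_sub, ← sq_lt_sq₀ (norm_nonneg _) (norm_nonneg _), norm_sub_sq_real]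
  constructor <;> intro h <;> linarith

variable {x d : σ → V} {cl : ι → σ} {t : ι → ℝ}

@[fun_prop]
lemma continuous_clusterConfig : Continuous (clusterConfig x d cl t) := by
  unfold clusterConfig
  fun_prop

lemma clusterConfig_zero (k : ι) : clusterConfig x d cl t 0 k = x (cl k) := by
  simp [clusterConfig]

lemma norm_lt_dist_clusterConfig_add {δ : ℝ} {i k : ι} {n : V} (ht : t.Injective) (hδ : δ ≠ 0)
    (hd : d (cl i) ≠ 0) (hn : inner ℝ (d (cl i)) n = 0) (hcl : cl k = cl i) (hki : k ≠ i) :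
    ‖n‖ < dist (clusterConfig x d cl t δ k) (clusterConfig x d cl t δ i + n) := by
  have hsub : clusterConfig x d cl t δ k - clusterConfig x d cl t δ i =
      (δ * (t k - t i)) • d (cl i) := by
    simp only [clusterConfig, hcl]
    module
  have hne : δ * (t k - t i) ≠ 0 := mul_ne_zero hδ (sub_ne_zero.2 (ht.ne hki))
  rw [norm_lt_dist_add_iff, hsub, real_inner_smul_left, hn]
  simpa only [mul_zero] using pow_pos (norm_pos_iff.2 (smul_ne_zero hne hd)) 2

variable [Finite ι] {s : ℕ}

lemma eventually_hasSmallDisk_of_eq [Finite σ] {i j : ι} (hx : x.Injective) (hcl : cl i = cl j)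
    (hs : (cl ⁻¹' {cl i}).ncard ≤ s) :
    ∀ᶠ δ in 𝓝 0, HasSmallDisk (clusterConfig x d cl t δ) s i j := by
  obtain ⟨r, hr, hsep⟩ : ∃ r > 0, ∀ Z ≠ cl i, r < dist (x Z) (x (cl i)) := by
    have shrink : ∀ᶠ r : ℝ in 𝓝[>] 0, ∀ Z ≠ cl i, r < dist (x Z) (x (cl i)) :=
      eventually_all.2 fun Z => eventually_all.2 fun hZ =>
        nhdsWithin_le_nhds (eventually_lt_nhds (dist_pos.2 (hx.ne hZ)))
    exact (eventually_mem_nhdsWithin.and shrink).exists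
  refine continuous_clusterConfig.continuousAt.eventually
    ((isOpen_setOf_hasSmallDisk s i j).mem_nhds ?_)
  refine .of_subset (c := x (cl i)) hr ?_ ?_ (fun k hk => ?_) hs
  · simpa [clusterConfig_zero] using hr.le
  · simpa [clusterConfig_zero, hcl] using hr.le
  · rw [clusterConfig_zero]
    exact hsep _ hk

lemma ReachedByTangentDisk.eventually_hasSmallDisk {i j : ι}
    (h : ReachedByTangentDisk x d (cl i) (cl j)) (ht : t.Injective) (hd : d (cl i) ≠ 0)
    (hs : (cl ⁻¹' {cl j}).ncard ≤ s) :
    ∀ᶠ δ in 𝓝[≠] 0, HasSmallDisk (clusterConfig x d cl t δ) (s + 1) i j := by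
  obtain ⟨n, hn, hreach, havoid⟩ := h
  let P := clusterConfig x d cl t
  have hcont (k : ι) : ContinuousAt (fun δ => dist (P δ k) (P δ i + n)) 0 := by fun_prop
  have reaches : ∀ᶠ δ in 𝓝 0, dist (P δ j) (P δ i + n) < ‖n‖ :=
    (hcont j).eventually_lt_const (by simpa [P, clusterConfig_zero] using hreach)
  have avoids : ∀ᶠ δ in 𝓝 0, ∀ k, cl k ≠ cl i → cl k ≠ cl j →
      ‖n‖ < dist (P δ k) (P δ i + n) :=
    eventually_all.2 fun k => eventually_all.2 fun hki =>
      eventually_all.2 fun hkj => (hcont k).eventually_const_lt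
        (by simpa [P, clusterConfig_zero] using havoid _ hki hkj)
  filter_upwards [nhdsWithin_le_nhds reaches, nhdsWithin_le_nhds avoids,
    self_mem_nhdsWithin] with δ hδreach hδavoid hδ
  refine .of_subset (A := insert i (cl ⁻¹' {cl j})) (dist_nonneg.trans_lt hδreach)
    (by simp [P]) hδreach.le (fun k hk => ?_) ((Set.ncard_insert_le _ _).trans (by gcongr))
  obtain ⟨hki, hkj⟩ : k ≠ i ∧ cl k ≠ cl j := by simpa using hk
  by_cases hcl : cl k = cl i
  · exact norm_lt_dist_clusterConfig_add ht hδ hd hn hcl hki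
  · exact hδavoid k hcl hkj

end Cluster

/-! ### The wheel -/

/-- The positions of the five clusters: north, south, centre, east and west.  In this order the
clusters `0, 1, 2` may hold red points and the clusters `2, 3, 4` blue ones. -/
def wheelSite : Fin 5 → Pt
  | 0 => !₂[0, 1]
  | 1 => !₂[0, -1]
  | 2 => !₂[0, 0]
  | 3 => !₂[1, 0]
  | 4 => !₂[-1, 0]

/-- The directions of the segments carrying the five clusters of `wheelSite`. -/
def wheelDir : Fin 5 → Pt
  | 0 | 1 | 3 | 4 => !₂[1, 0]
  | 2 => !₂[0, 1]

lemma wheelSite_injective : wheelSite.Injective := by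
  intro X Y
  fin_cases X <;> fin_cases Y <;> norm_num [wheelSite]

lemma wheelDir_ne_zero (X : Fin 5) : wheelDir X ≠ 0 := by
  fin_cases X <;> simp [wheelDir]

section

attribute [local simp] wheelSite wheelDir EuclideanSpace.real_norm_sq_eq PiLp.inner_apply

lemma reachedByTangentDisk_wheel_spoke {X Y : Fin 5}
    (h : (X = 0 ∨ X = 1) ∧ Y = 2 ∨ X = 2 ∧ (Y = 3 ∨ Y = 4)) :
    ReachedByTangentDisk wheelSite wheelDir X Y := by
  refine ⟨(3 / 5 : ℝ) • (wheelSite Y - wheelSite X), ?_, dist_add_lt_norm_iff.2 ?_, fun Z => ?_⟩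
  · rcases h with ⟨rfl | rfl, rfl⟩ | ⟨rfl, rfl | rfl⟩ <;> simp
  · rcases h with ⟨rfl | rfl, rfl⟩ | ⟨rfl, rfl | rfl⟩ <;> norm_num
  · rw [norm_lt_dist_add_iff]
    rcases h with ⟨rfl | rfl, rfl⟩ | ⟨rfl, rfl | rfl⟩ <;>
      fin_cases Z <;> norm_num <;> decide

lemma reachedByTangentDisk_wheel_rim {X Y : Fin 5} (hX : X = 3 ∨ X = 4) (hY : Y = 0 ∨ Y = 1) :
    ReachedByTangentDisk wheelSite wheelDir X Y := by
  refine ⟨(2 : ℝ) • wheelSite Y, ?_, dist_add_lt_norm_iff.2 ?_, fun Z => ?_⟩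
  · rcases hX with rfl | rfl <;> rcases hY with rfl | rfl <;> simp
  · rcases hX with rfl | rfl <;> rcases hY with rfl | rfl <;> norm_num
  · rw [norm_lt_dist_add_iff]
    rcases hX with rfl | rfl <;> rcases hY with rfl | rfl <;>
      fin_cases Z <;> norm_num <;> decide

end

lemma eq_or_reachedByTangentDisk_wheel {X Y : Fin 5} (hX : X ≤ 2) (hY : 2 ≤ Y) :
    X = Y ∨ ReachedByTangentDisk wheelSite wheelDir X Y ∨
      ReachedByTangentDisk wheelSite wheelDir Y X := by
  have hcases : X = Y ∨ ((X = 0 ∨ X = 1) ∧ Y = 2 ∨ X = 2 ∧ (Y = 3 ∨ Y = 4)) ∨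
      ((Y = 3 ∨ Y = 4) ∧ (X = 0 ∨ X = 1)) := by omega
  exact hcases.imp_right (Or.imp reachedByTangentDisk_wheel_spoke
    fun h => reachedByTangentDisk_wheel_rim h.1 h.2)

lemma ncard_preimage_divNat (m s : ℕ) (X : Fin m) :
    ((Fin.divNat : Fin (m * s) → Fin m) ⁻¹' {X}).ncard = s := by
  have hfibre : (Fin.divNat : Fin (m * s) → Fin m) ⁻¹' {X} =
      Set.range (finProdFinEquiv ∘ Prod.mk X) := by
    ext k
    constructor
    · rintro rfl
      exact ⟨k.modNat, finProdFinEquiv.apply_symm_apply k⟩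
    · rintro ⟨l, rfl⟩
      exact congrArg Prod.fst (finProdFinEquiv.symm_apply_apply (X, l))
  rw [hfibre, Set.ncard_range_of_injective
    (finProdFinEquiv.injective.comp (Prod.mk_right_injective X)), Nat.card_fin]

lemma exists_wheelConfig_hasSmallDisk (s : ℕ) :
    ∃ p : Fin (5 * s) → Pt,
      ∀ i j, i.divNat ≤ 2 → 2 ≤ j.divNat → HasSmallDisk p (s + 1) i j := by
  let t (k : Fin (5 * s)) : ℝ := (k : ℕ)
  have ht : t.Injective := Nat.cast_injective.comp Fin.val_injective
  have hs (X : Fin 5) : ((Fin.divNat : Fin (5 * s) → Fin 5) ⁻¹' {X}).ncard ≤ s :=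
    (ncard_preimage_divNat 5 s X).le
  suffices h : ∀ᶠ δ in 𝓝[≠] 0, ∀ i j : Fin (5 * s), i.divNat ≤ 2 → 2 ≤ j.divNat →
      HasSmallDisk (clusterConfig wheelSite wheelDir Fin.divNat t δ) (s + 1) i j from
    h.exists.imp' _ fun _ => id
  simp only [eventually_all]
  intro i j hi hj
  rcases eq_or_reachedByTangentDisk_wheel hi hj with heq | hreach | hreach
  · exact nhdsWithin_le_nhds
      (eventually_hasSmallDisk_of_eq wheelSite_injective heq ((hs _).trans s.le_succ))
  · exact hreach.eventually_hasSmallDisk ht (wheelDir_ne_zero _) (hs _)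
  · exact (hreach.eventually_hasSmallDisk ht (wheelDir_ne_zero _) (hs _)).mono fun _ => .symm

theorem pi_bichrom_upper_bound_general {a b s : ℕ} (ha : a ≤ 3 * s) (hb : b ≤ 3 * s)
    (hab : a + b ≤ 5 * s) :
    ∃ R B : Set Pt, R.Finite ∧ B.Finite ∧ Disjoint R B ∧
      R.ncard = a ∧ B.ncard = b ∧ GenPos (R ∪ B) ∧
      ∀ u ∈ R, ∀ v ∈ B, ∃ (c : Pt) (r : ℝ), 0 < r ∧
        u ∈ closedBall c r ∧ v ∈ closedBall c r ∧
        ((R ∪ B) ∩ closedBall c r).ncard ≤ s + 1 := by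
  obtain ⟨p₀, hp₀⟩ := exists_wheelConfig_hasSmallDisk s
  obtain ⟨p, hinj, hgen, hdisk⟩ := exists_injective_genPos_hasSmallDisk
    (r := fun i j => i.divNat ≤ 2 ∧ 2 ≤ j.divNat) fun i j h => hp₀ i j h.1 h.2
  let red : Fin a → Fin (5 * s) := Fin.castLE (by omega)
  let blue : Fin b → Fin (5 * s) := Fin.rev ∘ Fin.castLE (by omega)
  have hred : red.Injective := Fin.castLE_injective _
  have hblue : blue.Injective := Fin.rev_injective.comp (Fin.castLE_injective _)
  have red_val (i : Fin a) : (red i : ℕ) = i := rfl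
  have blue_val (j : Fin b) : (blue j : ℕ) = 5 * s - (j + 1) := rfl
  have red_ne_blue (i : Fin a) (j : Fin b) : red i ≠ blue j := by
    rw [Fin.ne_iff_vne, red_val, blue_val]
    omega
  have red_cluster (i : Fin a) : (red i).divNat ≤ 2 := by
    rw [Fin.le_def, Fin.coe_divNat, red_val]
    exact Nat.le_of_lt_succ (Nat.div_lt_of_lt_mul (by omega))
  have blue_cluster (j : Fin b) : 2 ≤ (blue j).divNat := by
    rw [Fin.le_def, Fin.coe_divNat, blue_val]
    exact (Nat.le_div_iff_mul_le (by have := j.isLt; omega : 0 < s)).2 (by omega)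
  have hsub : Set.range (p ∘ red) ∪ Set.range (p ∘ blue) ⊆ Set.range p :=
    Set.union_subset (Set.range_comp_subset_range _ _) (Set.range_comp_subset_range _ _)
  refine ⟨Set.range (p ∘ red), Set.range (p ∘ blue), Set.finite_range _, Set.finite_range _,
    ?_, ?_, ?_, hgen.mono hsub, ?_⟩
  · rw [Set.disjoint_left]
    rintro _ ⟨i, rfl⟩ ⟨j, hj⟩
    exact red_ne_blue i j (hinj hj).symm
  · rw [Set.ncard_range_of_injective (hinj.comp hred), Nat.card_fin]
  · rw [Set.ncard_range_of_injective (hinj.comp hblue), Nat.card_fin]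
  · rintro _ ⟨i, rfl⟩ _ ⟨j, rfl⟩
    exact (hdisk _ _ ⟨red_cluster i, blue_cluster j⟩).exists_ncard_inter_closedBall_le hsub

/-- For every even `n ≥ 6` there exists a set of `n` points in the plane in general
position, partitioned into `n/2` red points `R` and `n/2` blue points `B`, such that for
every red point `u ∈ R` and every blue point `v ∈ B` there is a closed disk containing
both `u` and `v` that contains at most `⌈n/5⌉ + 1` points of the set. -/
theorem pi_bichrom_upper_bound (n : ℕ) (hn : 6 ≤ n) (heven : Even n) :
    ∃ R B : Set Pt, R.Finite ∧ B.Finite ∧ Disjoint R B ∧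
      R.ncard = n / 2 ∧ B.ncard = n / 2 ∧ GenPos (R ∪ B) ∧
      ∀ u ∈ R, ∀ v ∈ B, ∃ (c : Pt) (r : ℝ), 0 < r ∧
        u ∈ closedBall c r ∧ v ∈ closedBall c r ∧
        (((R ∪ B) ∩ closedBall c r).ncard : ℤ) ≤ ⌈(n : ℝ) / 5⌉ + 1 := by
  have hn_le : n ≤ 5 * ⌈(n : ℝ) / 5⌉₊ := by
    exact_mod_cast (div_le_iff₀' (by norm_num)).1 (Nat.le_ceil ((n : ℝ) / 5))
  rw [← Int.natCast_ceil_eq_ceil (by positivity : 0 ≤ (n : ℝ) / 5)]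
  exact_mod_cast pi_bichrom_upper_bound_general (a := n / 2) (b := n / 2) (by omega) (by omega)
    (by omega)
end
end

section
/- Let p and q be distinct points of the Euclidean plane, let m = (p+q)/2 be their midpoint, and let w be a unit vector orthogonal to q − p. For a real number s, let D_s denote the closed disk centered at c_s = m + s·w with radius dist(c_s, p) (so that p and q lie on the boundary of D_s). Then for all real numbers s ≤ t, every point x ∈ D_s satisfying ⟨x − m, w⟩ ≥ 0 belongs to D_t. -/
/-!
A point `x` belongs to the disk with center `c` through `p` exactly when `c` is at least as close
to `x` as to `p`, that is, when `c` lies on the side of `x` of the perpendicular bisector of `px`.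
If `⟪x - p, w⟫ ≥ 0`, moving `c` in the direction `w` cannot leave this half-plane. For `w`
orthogonal to the line `pq`, the product `⟪x - z, w⟫` is the same for every point `z` of that line,
so `p` may be replaced by the midpoint.
-/

open EuclideanGeometry Metric
open scoped RealInnerProductSpace

noncomputable section

section

variable {V P : Type*} [NormedAddCommGroup V] [InnerProductSpace ℝ V] [MetricSpace P]
  [NormedAddTorsor V P]

lemma dist_sq_sub_dist_sq_eq_two_mul_inner_vsub_midpoint (c x p : P) :
    dist c p ^ 2 - dist c x ^ 2 = 2 * ⟪c -ᵥ midpoint ℝ p x, x -ᵥ p⟫ := by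
  have hmid : c -ᵥ midpoint ℝ p x = (2⁻¹ : ℝ) • ((c -ᵥ p) + (c -ᵥ x)) := by
    rw [vsub_midpoint, invOf_eq_inv, smul_add]
  rw [dist_eq_norm_vsub V, dist_eq_norm_vsub V, hmid, ← vsub_sub_vsub_cancel_left x p c,
    real_inner_smul_left, inner_add_left, inner_sub_right, inner_sub_right,
    real_inner_self_eq_norm_sq, real_inner_self_eq_norm_sq, real_inner_comm (c -ᵥ x)]
  ring

lemma dist_le_dist_iff_inner_vsub_midpoint_nonneg {c x p : P} :
    dist c x ≤ dist c p ↔ 0 ≤ ⟪c -ᵥ midpoint ℝ p x, x -ᵥ p⟫ := by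
  rw [← sq_le_sq₀ dist_nonneg dist_nonneg, ← sub_nonneg,
    dist_sq_sub_dist_sq_eq_two_mul_inner_vsub_midpoint, mul_nonneg_iff_of_pos_left two_pos]

lemma inner_vsub_lineMap_eq_of_inner_vsub_eq_zero {p q : P} {w : V}
    (h : ⟪w, q -ᵥ p⟫ = 0) (x : P) (r : ℝ) : ⟪x -ᵥ AffineMap.lineMap p q r, w⟫ = ⟪x -ᵥ p, w⟫ := by
  rw [← vsub_sub_vsub_cancel_right x _ p, AffineMap.lineMap_vsub_left, inner_sub_left,
    real_inner_smul_left, real_inner_comm w (q -ᵥ p), h, mul_zero, sub_zero]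

theorem disk_containment_along_bisector_general {m p x : P} {w : V} {s t : ℝ} (hst : s ≤ t)
    (hside : 0 ≤ ⟪x -ᵥ p, w⟫)
    (hx : x ∈ closedBall (s • w +ᵥ m) (dist (s • w +ᵥ m) p)) :
    x ∈ closedBall (t • w +ᵥ m) (dist (t • w +ᵥ m) p) := by
  have inner_center (r : ℝ) : ⟪(r • w +ᵥ m) -ᵥ midpoint ℝ p x, x -ᵥ p⟫ =
      r * ⟪x -ᵥ p, w⟫ + ⟪m -ᵥ midpoint ℝ p x, x -ᵥ p⟫ := by
    rw [vadd_vsub_assoc, inner_add_left, real_inner_smul_left, real_inner_comm]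
  rw [mem_closedBall', dist_le_dist_iff_inner_vsub_midpoint_nonneg, inner_center] at hx ⊢
  exact hx.trans (by gcongr)

end

/-- Let `p ≠ q` be points of the plane, `m` their midpoint and `w` a unit vector
orthogonal to `q − p`. For `s : ℝ`, let `D s` be the closed disk centered at
`m + s • w` with `p` (and hence `q`) on its boundary. Then for `s ≤ t`, every point of
`D s` lying on the side `⟪x − m, w⟫ ≥ 0` of the line `pq` belongs to `D t`. -/
theorem disk_containment_along_bisector (p q : Pt) (hpq : p ≠ q)
    (w : Pt) (hw : ‖w‖ = 1) (horth : ⟪w, q - p⟫ = 0)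
    (s t : ℝ) (hst : s ≤ t) (x : Pt)
    (hx : x ∈ closedBall (midpoint ℝ p q + s • w)
      (dist (midpoint ℝ p q + s • w) p))
    (hside : 0 ≤ ⟪x - midpoint ℝ p q, w⟫) :
    x ∈ closedBall (midpoint ℝ p q + t • w)
      (dist (midpoint ℝ p q + t • w) p) := by
  rw [add_comm, ← vadd_eq_add] at hx ⊢
  exact disk_containment_along_bisector_general hst
    (hside.trans_eq (inner_vsub_lineMap_eq_of_inner_vsub_eq_zero horth x ⅟2)) hx
end
end
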